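/- arXiv:1309.7970 — 11 statements merged into one kernel-verified Lean document; each statement's English description precedes it below -/
import Mathlib

section
/- Let x₀ < x₁ < ⋯ < xₙ be real nodes and let x̂₀ = x₀ < x̂₁ < ⋯ < x̂_{n−1} < x̂ₙ = xₙ. Fix k ∈ {0, …, n} and set ξ := Σ_{j≠k} |r_{jk}(x, x̂)|. If ξ < 1, then −(ξ²/(1−ξ)³)·(1 + ξ²/4) ≤ z_k(x, x̂) − Σ_{j≠k} r_{jk}(x, x̂) ≤ ξ²/(1−ξ). -/
/-!
Cancelling the weights gives `z_k + 1 = ∏_{j ≠ k} (1 + r_{jk})`, so `z_k - ∑ r_{jk}` consists of the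
terms of degree at least two in the expanded product. Replacing each `r_{jk}` by its absolute value
bounds it by `∏ (1 + |r_{jk}|) - 1 - ξ ≤ exp ξ - 1 - ξ ≤ 1 / (1 - ξ) - 1 - ξ = ξ² / (1 - ξ)`.
This two-sided bound is stronger than the claimed lower bound.
-/

/-- Barycentric weight `λ_k(x) = 1 / ∏_{j ≠ k} (x_k - x_j)`. -/
noncomputable def lam {n : ℕ} (x : Fin (n + 1) → ℝ) (k : Fin (n + 1)) : ℝ :=
  (∏ j ∈ Finset.univ.erase k, (x k - x j))⁻¹

/-- Relative error in the weights `z_k(x, x̂)`. -/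
noncomputable def zk {n : ℕ} (x xh : Fin (n + 1) → ℝ) (k : Fin (n + 1)) : ℝ :=
  (lam x k - lam xh k) / lam xh k

/-- Relative error in the node differences `r_{jk}(x, x̂)`. -/
noncomputable def rjk {n : ℕ} (x xh : Fin (n + 1) → ℝ) (j k : Fin (n + 1)) : ℝ :=
  (xh k - xh j) / (x k - x j) - 1

/-- The terms of degree at least one, resp. at least two, of `∏ (1 + r i)` are dominated by those of
`∏ (1 + |r i|)`; the first bound feeds the induction step of the second. -/
lemma abs_prod_one_add_sub_le {ι : Type*} (s : Finset ι) (r : ι → ℝ) :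
    |∏ i ∈ s, (1 + r i) - 1| ≤ ∏ i ∈ s, (1 + |r i|) - 1 ∧
      |∏ i ∈ s, (1 + r i) - 1 - ∑ i ∈ s, r i| ≤
        ∏ i ∈ s, (1 + |r i|) - 1 - ∑ i ∈ s, |r i| := by
  classical
  induction s using Finset.induction_on with
  | empty => simp
  | insert a s ha ih =>
    obtain ⟨ih₁, ih₂⟩ := ih
    rw [Finset.prod_insert ha, Finset.prod_insert ha, Finset.sum_insert ha, Finset.sum_insert ha]
    set P := ∏ i ∈ s, (1 + r i)
    set Q := ∏ i ∈ s, (1 + |r i|)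
    set S := ∑ i ∈ s, r i
    have hmul : |r a * (P - 1)| ≤ |r a| * (Q - 1) := by
      rw [abs_mul]
      exact mul_le_mul_of_nonneg_left ih₁ (abs_nonneg _)
    constructor
    · calc |(1 + r a) * P - 1| = |(P - 1) + r a * (P - 1) + r a| := by congr 1; ring
        _ ≤ |P - 1| + |r a * (P - 1)| + |r a| := abs_add_three _ _ _
        _ ≤ (1 + |r a|) * Q - 1 := by linarith
    · calc |(1 + r a) * P - 1 - (r a + S)| = |(P - 1 - S) + r a * (P - 1)| := by congr 1; ring
        _ ≤ |P - 1 - S| + |r a * (P - 1)| := abs_add_le _ _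
        _ ≤ _ := by linarith

lemma zk_eq_prod_sub_one {n : ℕ} (x xh : Fin (n + 1) → ℝ)
    (hx : StrictMono x) (hxh : StrictMono xh) (k : Fin (n + 1)) :
    zk x xh k = ∏ j ∈ Finset.univ.erase k, (1 + rjk x xh j k) - 1 := by
  have hne : ∀ y : Fin (n + 1) → ℝ, StrictMono y →
      ∏ j ∈ Finset.univ.erase k, (y k - y j) ≠ 0 := fun y hy =>
    Finset.prod_ne_zero_iff.mpr fun j hj =>
      sub_ne_zero.mpr (hy.injective.ne (Finset.ne_of_mem_erase hj).symm)
  have h₁ := hne x hx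
  have h₂ := hne xh hxh
  simp only [zk, lam, rjk, add_sub_cancel, Finset.prod_div_distrib]
  field_simp

theorem stmt_0 {n : ℕ} (x xh : Fin (n + 1) → ℝ)
    (hx : StrictMono x) (hxh : StrictMono xh)
    (h0 : xh 0 = x 0) (hn : xh (Fin.last n) = x (Fin.last n))
    (k : Fin (n + 1)) (ξ : ℝ)
    (hξ : ξ = ∑ j ∈ Finset.univ.erase k, |rjk x xh j k|)
    (hξ1 : ξ < 1) :
    -(ξ ^ 2 / (1 - ξ) ^ 3) * (1 + ξ ^ 2 / 4) ≤
        zk x xh k - ∑ j ∈ Finset.univ.erase k, rjk x xh j k ∧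
      zk x xh k - ∑ j ∈ Finset.univ.erase k, rjk x xh j k ≤ ξ ^ 2 / (1 - ξ) := by
  have hξ0 : 0 ≤ ξ := hξ ▸ Finset.sum_nonneg fun _ _ => abs_nonneg _
  have hpos : 0 < 1 - ξ := by linarith
  have hprod : ∏ j ∈ Finset.univ.erase k, (1 + |rjk x xh j k|) ≤ Real.exp ξ := by
    rw [hξ, Real.exp_sum]
    exact Finset.prod_le_prod (fun _ _ => by positivity) fun j _ => by
      linarith [Real.add_one_le_exp |rjk x xh j k|]
  have hexp : Real.exp ξ ≤ 1 / (1 - ξ) := by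
    rw [le_div_iff₀ hpos]
    calc Real.exp ξ * (1 - ξ) ≤ Real.exp ξ * Real.exp (-ξ) :=
          mul_le_mul_of_nonneg_left (Real.one_sub_le_exp_neg ξ) (Real.exp_pos ξ).le
      _ = 1 := by rw [← Real.exp_add, add_neg_cancel, Real.exp_zero]
  have hid : 1 / (1 - ξ) - 1 - ξ = ξ ^ 2 / (1 - ξ) := by
    field_simp
    ring
  have habs := (abs_prod_one_add_sub_le (Finset.univ.erase k) fun j => rjk x xh j k).2
  rw [← zk_eq_prod_sub_one x xh hx hxh k, ← hξ] at habs
  obtain ⟨hlo, hhi⟩ := abs_le.mp (habs.trans (show _ ≤ ξ ^ 2 / (1 - ξ) by linarith))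
  refine ⟨?_, hhi⟩
  have hcube : ξ ^ 2 / (1 - ξ) ≤ ξ ^ 2 / (1 - ξ) ^ 3 := by
    refine div_le_div_of_nonneg_left (sq_nonneg ξ) (by positivity) ?_
    exact pow_le_of_le_one hpos.le (by linarith) (by norm_num)
  have hextra : 0 ≤ ξ ^ 2 / (1 - ξ) ^ 3 * (ξ ^ 2 / 4) := by positivity
  linarith
end

section
/- Let n ≥ 1, let x_k be the Chebyshev points of the second kind, let θ ∈ ℝ^{n+1}, and set x̂_k := (1 + θ_k)·x_k for k = 0, …, n. Then for every k ∈ {0, …, n}, Σ_{j≠k} |r_{jk}(x, x̂)| ≤ 2.6·‖θ‖_∞·n², where ‖θ‖_∞ = max_k |θ_k|. -/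
open Finset Real

/-- Gap between two Chebyshev points; `m` is any lower bound for `min (j+k, 2n-j-k)`. -/
lemma cheb_gap {n : ℕ} (hn : 1 ≤ n) {j k : ℕ} (hjk : j < k) (hk : k ≤ n) {m : ℝ} (hm0 : 0 ≤ m)
    (hm1 : m ≤ j + k) (hm2 : m + j + k ≤ 2 * n) :
    2 * ((k : ℝ) - j) * m / n ^ 2 ≤ cos (j * π / n) - cos (k * π / n) := by
  have hn0 : (0 : ℝ) < n := by exact_mod_cast hn
  have hπ := pi_pos
  have hjk' : (j : ℝ) < k := by exact_mod_cast hjk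
  have hk' : (k : ℝ) ≤ n := by exact_mod_cast hk
  have hj0 : (0 : ℝ) ≤ j := j.cast_nonneg
  have jordan : ∀ t : ℝ, 0 ≤ t → t ≤ n → t / n ≤ sin (t * (π / (2 * n))) := by
    intro t h0 h1
    have h := mul_le_sin (x := t * (π / (2 * n))) (by positivity) (by
      rw [← mul_div_assoc, div_le_div_iff₀ (by positivity) (by norm_num)]
      nlinarith)
    calc t / n = 2 / π * (t * (π / (2 * n))) := by field_simp
      _ ≤ _ := h
  have h1 : ((k : ℝ) - j) / n ≤ sin (((k : ℝ) - j) * (π / (2 * n))) :=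
    jordan _ (by linarith) (by linarith)
  have h2 : m / n ≤ sin (((j : ℝ) + k) * (π / (2 * n))) := by
    rcases le_total ((j : ℝ) + k) n with h | h
    · exact le_trans (by gcongr) (jordan _ (by linarith) h)
    · have h3 := jordan (2 * n - (j + k)) (by linarith) (by linarith)
      have h4 : (2 * n - ((j : ℝ) + k)) * (π / (2 * n)) = π - ((j : ℝ) + k) * (π / (2 * n)) := by
        field_simp
      rw [h4, sin_pi_sub] at h3
      exact le_trans (by gcongr; linarith) h3
  have h5 : cos (j * π / n) - cos (k * π / n)
      = 2 * (sin (((k : ℝ) - j) * (π / (2 * n))) * sin (((j : ℝ) + k) * (π / (2 * n)))) := by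
    rw [cos_sub_cos]
    have e1 : (j * π / n + k * π / n) / 2 = ((j : ℝ) + k) * (π / (2 * n)) := by field_simp
    have e2 : (j * π / n - k * π / n) / 2 = -(((k : ℝ) - j) * (π / (2 * n))) := by
      field_simp
      ring
    rw [e1, e2, sin_neg]
    ring
  rw [h5]
  calc 2 * ((k : ℝ) - j) * m / n ^ 2 = 2 * (((k : ℝ) - j) / n * (m / n)) := by
        field_simp
    _ ≤ _ := by
        have : 0 ≤ ((k : ℝ) - j) / n := div_nonneg (by linarith) hn0.le
        have : 0 ≤ m / n := by positivity
        gcongr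
        linarith

/-- Reciprocal form of `cheb_gap`. -/
lemma cheb_inv_gap {n : ℕ} (hn : 1 ≤ n) {j k : ℕ} (hjk : j < k) (hk : k ≤ n) {d m : ℝ}
    (hd : d = k - j) (hm0 : 0 < m) (hm1 : m ≤ j + k) (hm2 : m + j + k ≤ 2 * n) :
    2 / |cos (j * π / n) - cos (k * π / n)| ≤ n ^ 2 / (d * m) := by
  have hn0 : (0 : ℝ) < n := by exact_mod_cast hn
  have hjk' : (j : ℝ) < k := by exact_mod_cast hjk
  have hd0 : 0 < d := by linarith
  have h := cheb_gap hn hjk hk hm0.le hm1 hm2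
  rw [← hd] at h
  have hpos : 0 < 2 * d * m / (n : ℝ) ^ 2 := by positivity
  rw [abs_of_pos (hpos.trans_le h)]
  calc _ ≤ 2 / (2 * d * m / (n : ℝ) ^ 2) := by gcongr
    _ = _ := by field_simp

lemma sum_le_endpoint {N : ℕ} {p : ℕ → ℝ} {C : ℝ} (hC : 0 ≤ C)
    (hp : ∀ i < N, p i ≤ C / ((i + 1) * (i + 1))) : ∑ i ∈ range N, p i ≤ 2 * C := by
  have key : ∀ M : ℕ, ∑ i ∈ range (M + 1), C / (((i : ℝ) + 1) * (i + 1)) ≤ C * (2 - 1 / (M + 1)) := by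
    intro M
    induction M with
    | zero => norm_num
    | succ M ih =>
      rw [sum_range_succ]
      have hM : (0 : ℝ) ≤ M := M.cast_nonneg
      have h : 1 / (((M : ℝ) + 1 + 1) * (M + 1 + 1)) ≤ 1 / (M + 1) - 1 / (M + 1 + 1) := by
        rw [div_sub_div _ _ (by positivity) (by positivity),
          div_le_div_iff₀ (by positivity) (by positivity)]
        nlinarith
      have h' := mul_le_mul_of_nonneg_left h hC
      rw [mul_one_div] at h'
      push_cast
      linarith
  refine (sum_le_sum fun i hi => hp i (mem_range.1 hi)).trans ?_
  rcases N with _ | M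
  · simpa using hC
  · have : 0 ≤ C * (1 / ((M : ℝ) + 1)) := by positivity
    linarith [key M]

lemma sum_le_interior {N : ℕ} {p : ℕ → ℝ} {C : ℝ} (hC : 0 ≤ C)
    (hp : ∀ i < N, p i ≤ C / ((i + 1) * (i + 1)))
    (hp' : ∀ i, i + 1 < N → p i ≤ C / ((i + 1) * (i + 2))) : ∑ i ∈ range N, p i ≤ C := by
  rcases N with _ | M
  · simpa using hC
  have key : ∀ M : ℕ, ∑ i ∈ range M, C / (((i : ℝ) + 1) * (i + 2)) = C * (1 - 1 / (M + 1)) := by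
    intro M
    induction M with
    | zero => norm_num
    | succ M ih =>
      rw [sum_range_succ, ih]
      push_cast
      field_simp
      ring
  rw [sum_range_succ]
  have h1 : ∑ i ∈ range M, p i ≤ C * (1 - 1 / (M + 1)) := by
    rw [← key]
    exact sum_le_sum fun i hi => hp' i (by simpa using mem_range.1 hi)
  have h2 := hp M (by lia)
  have hM : (0 : ℝ) ≤ M := M.cast_nonneg
  have h3 : C / (((M : ℝ) + 1) * (M + 1)) ≤ C * (1 / (M + 1)) := by
    rw [mul_one_div]
    gcongr
    nlinarith
  linarith

/-- The node sum; the term `j = k` is `2 / 0 = 0`, so it may be included. -/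
lemma cheb_sum {n : ℕ} (hn : 1 ≤ n) {k : ℕ} (hk : k ≤ n) :
    ∑ j ∈ range (n + 1), 2 / |cos (j * π / n) - cos (k * π / n)| ≤ 2 * (n : ℝ) ^ 2 := by
  set q : ℕ → ℝ := fun j => 2 / |cos (j * π / n) - cos (k * π / n)| with hq
  change ∑ j ∈ range (n + 1), q j ≤ _
  have hC : (0 : ℝ) ≤ (n : ℝ) ^ 2 := by positivity
  have hqk : q k = 0 := by simp [hq]
  have split : ∑ j ∈ range (n + 1), q j
      = ∑ i ∈ range k, q (k - 1 - i) + ∑ i ∈ range (n - k), q (k + 1 + i) := by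
    have e : n + 1 = (k + 1) + (n - k) := by lia
    rw [e, sum_range_add, sum_range_succ, hqk, sum_range_reflect, add_zero]
  have left : ∀ i < k, ∀ e : ℕ, e ≤ 1 → (e = 1 → i + 1 < k ∧ k < n) →
      q (k - 1 - i) ≤ (n : ℝ) ^ 2 / (((i : ℝ) + 1) * (((i + 1 + e : ℕ) : ℝ))) := by
    intro i hi e he he'
    apply cheb_inv_gap hn (by lia) hk
    · rw [show k - 1 - i = k - (i + 1) by lia, Nat.cast_sub (by lia)]
      push_cast
      ring
    · positivity
    · exact_mod_cast (by lia : i + 1 + e ≤ k - 1 - i + k)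
    · exact_mod_cast (by lia : i + 1 + e + (k - 1 - i) + k ≤ 2 * n)
  have right : ∀ i < n - k, ∀ e : ℕ, e ≤ 1 → (e = 1 → i + 1 < n - k ∧ 0 < k) →
      q (k + 1 + i) ≤ (n : ℝ) ^ 2 / (((i : ℝ) + 1) * (((i + 1 + e : ℕ) : ℝ))) := by
    intro i hi e he he'
    simp only [hq]
    rw [abs_sub_comm]
    apply cheb_inv_gap hn (by lia) (by lia)
    · push_cast
      ring
    · positivity
    · exact_mod_cast (by lia : i + 1 + e ≤ k + (k + 1 + i))
    · exact_mod_cast (by lia : i + 1 + e + k + (k + 1 + i) ≤ 2 * n)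
  have left0 : ∀ i < k, q (k - 1 - i) ≤ (n : ℝ) ^ 2 / (((i : ℝ) + 1) * (i + 1)) := fun i hi => by
    simpa using left i hi 0 (by simp) (by simp)
  have right0 : ∀ i < n - k, q (k + 1 + i) ≤ (n : ℝ) ^ 2 / (((i : ℝ) + 1) * (i + 1)) :=
    fun i hi => by simpa using right i hi 0 (by simp) (by simp)
  rw [split]
  rcases Nat.eq_zero_or_pos k with h0 | h0
  · have := sum_le_endpoint hC right0
    have hl : ∑ i ∈ range k, q (k - 1 - i) = 0 := by rw [h0]; simp
    linarith
  rcases hk.eq_or_lt with h1 | h1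
  · have := sum_le_endpoint hC left0
    have hr : ∑ i ∈ range (n - k), q (k + 1 + i) = 0 := by rw [h1]; simp
    linarith
  have hl := sum_le_interior hC left0 fun i hi => by
    have := left i (by lia) 1 le_rfl fun _ => ⟨hi, h1⟩
    push_cast at this
    rwa [add_assoc (i : ℝ) 1 1, one_add_one_eq_two] at this
  have hr := sum_le_interior hC right0 fun i hi => by
    have := right i (by lia) 1 le_rfl fun _ => ⟨hi, h0⟩
    push_cast at this
    rwa [add_assoc (i : ℝ) 1 1, one_add_one_eq_two] at this
  linarith

theorem stmt_1 {n : ℕ} (hn : 1 ≤ n) (θ x xh : Fin (n + 1) → ℝ)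
    (hx : ∀ k : Fin (n + 1), x k = -Real.cos ((k : ℕ) * Real.pi / n))
    (hxh : ∀ k : Fin (n + 1), xh k = (1 + θ k) * x k)
    (k : Fin (n + 1)) :
    ∑ j ∈ Finset.univ.erase k, |rjk x xh j k| ≤
      2.6 * (Finset.univ.sup' Finset.univ_nonempty fun i => |θ i|) * n ^ 2 := by
  set T := Finset.univ.sup' Finset.univ_nonempty fun i => |θ i| with hT
  have hθ : ∀ i, |θ i| ≤ T := fun i => Finset.le_sup' (fun i => |θ i|) (Finset.mem_univ i)
  have hT0 : 0 ≤ T := (abs_nonneg _).trans (hθ k)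
  have hθx : ∀ i, |θ i * x i| ≤ T := fun i => by
    rw [abs_mul]
    have h1 : |x i| ≤ 1 := by
      rw [hx, abs_neg]
      exact abs_cos_le_one _
    calc |θ i| * |x i| ≤ T * 1 := mul_le_mul (hθ i) h1 (abs_nonneg _) hT0
      _ = T := mul_one T
  have term : ∀ j ∈ Finset.univ.erase k, |rjk x xh j k| ≤
      T * (2 / |cos ((j : ℕ) * π / n) - cos ((k : ℕ) * π / n)|) := by
    intro j hj
    have e : cos ((j : ℕ) * π / n) - cos ((k : ℕ) * π / n) = x k - x j := by
      rw [hx, hx]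
      ring
    -- Distinctness of the nodes: with a vanishing denominator `rjk` would be the junk value `-1`.
    have hne : x k - x j ≠ 0 := by
      have hn0 : (0 : ℝ) < n := by exact_mod_cast hn
      have mem : ∀ i : Fin (n + 1), ((i : ℕ) : ℝ) * π / n ∈ Set.Icc 0 π := fun i => by
        refine ⟨by positivity, ?_⟩
        rw [div_le_iff₀ hn0, mul_comm]
        have : ((i : ℕ) : ℝ) ≤ n := by exact_mod_cast Nat.lt_succ_iff.1 i.2
        gcongr
      rw [← e, sub_ne_zero]
      intro h
      have h' := injOn_cos (mem j) (mem k) h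
      have hπ := pi_ne_zero
      have h'' : ((j : ℕ) : ℝ) = (k : ℕ) := by
        field_simp at h'
        exact h'
      exact (Finset.mem_erase.1 hj).1 (Fin.ext (by exact_mod_cast h''))
    have hr : rjk x xh j k = (θ k * x k - θ j * x j) / (x k - x j) := by
      rw [rjk, hxh, hxh]
      field_simp
      ring
    rw [hr, abs_div, e, ← mul_div_assoc]
    gcongr
    calc |θ k * x k - θ j * x j| ≤ |θ k * x k| + |θ j * x j| := abs_sub _ _
      _ ≤ T * 2 := by linarith [hθx k, hθx j]
  calc ∑ j ∈ Finset.univ.erase k, |rjk x xh j k|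
      ≤ ∑ j ∈ Finset.univ.erase k,
          T * (2 / |cos ((j : ℕ) * π / n) - cos ((k : ℕ) * π / n)|) := Finset.sum_le_sum term
    _ ≤ ∑ j : Fin (n + 1), T * (2 / |cos ((j : ℕ) * π / n) - cos ((k : ℕ) * π / n)|) :=
        Finset.sum_le_sum_of_subset_of_nonneg (Finset.erase_subset _ _) fun _ _ _ => by positivity
    _ = T * ∑ j ∈ range (n + 1), 2 / |cos (j * π / n) - cos ((k : ℕ) * π / n)| := by
        rw [← Finset.mul_sum,
          Fin.sum_univ_eq_sum_range
            (fun j : ℕ => 2 / |cos (j * π / n) - cos ((k : ℕ) * π / n)|)]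
    _ ≤ T * (2 * (n : ℝ) ^ 2) := by
        gcongr
        exact cheb_sum hn (Nat.lt_succ_iff.1 k.2)
    _ ≤ 2.6 * T * n ^ 2 := by
        have : 0 ≤ T * (n : ℝ) ^ 2 := by positivity
        linarith
end

section
/- Let x₀ < ⋯ < xₙ be real nodes and let x̂₀ = x₀ < x̂₁ < ⋯ < x̂_{n−1} < x̂ₙ = xₙ. Suppose δ := max_{0≤k≤n} Σ_{j≠k} |r_{jk}(x, x̂)| < 0.01 and max_k |x̂_k − x_k| ≤ 0.1·min_{j≠k} |x_j − x_k|. Then Λ(x̂) ≤ (1 + 4δ)·Λ(x), where Λ(x) and Λ(x̂) are the Lebesgue constants of the node families x and x̂ over the interval [x₀, xₙ]. -/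
/-- The Lebesgue constant of the node family `v` over the interval `[a, b]`:
`sup_{t ∈ [a,b]} ∑_k |ℓ_k(t)|`, with `ℓ_k` the Lagrange basis polynomials of `v`. -/
noncomputable def leb {ι : Type*} [Fintype ι] [DecidableEq ι] (v : ι → ℝ) (a b : ℝ) : ℝ :=
  ⨆ t : Set.Icc a b, ∑ k, |(Lagrange.basis Finset.univ v k).eval (t : ℝ)|

/-- `|r_{jk}|`, with the value `0` on the diagonal, where `rjk` takes the junk value `-1`. -/
noncomputable def absR {n : ℕ} (x xh : Fin (n + 1) → ℝ) (j k : Fin (n + 1)) : ℝ :=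
  if j = k then 0 else |rjk x xh j k|

lemma absR_nonneg {n : ℕ} (x xh : Fin (n + 1) → ℝ) (j k : Fin (n + 1)) : 0 ≤ absR x xh j k := by
  unfold absR; split_ifs <;> positivity

lemma sum_absR {n : ℕ} (x xh : Fin (n + 1) → ℝ) (k : Fin (n + 1)) :
    ∑ j, absR x xh j k = ∑ j ∈ Finset.univ.erase k, |rjk x xh j k| := by
  rw [← Finset.add_sum_erase _ _ (Finset.mem_univ k)]
  have h : absR x xh k k = 0 := by simp [absR]
  rw [h, zero_add]
  refine Finset.sum_congr rfl fun j hj => ?_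
  simp [absR, Finset.ne_of_mem_erase hj]

lemma abs_diff_bounds {n : ℕ} {x : Fin (n + 1) → ℝ} (xh : Fin (n + 1) → ℝ)
    (hx : StrictMono x) (j k : Fin (n + 1)) :
    |xh k - xh j| ≤ (1 + absR x xh j k) * |x k - x j| ∧
      (1 - absR x xh j k) * |x k - x j| ≤ |xh k - xh j| := by
  by_cases h : j = k
  · subst h; simp
  · have hne : x k - x j ≠ 0 := sub_ne_zero.2 fun e => h (hx.injective e).symm
    have e : xh k - xh j = (1 + rjk x xh j k) * (x k - x j) := by
      unfold rjk; field_simp; ring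
    have ha : absR x xh j k = |rjk x xh j k| := by simp [absR, h]
    rw [e, abs_mul, ha]
    constructor
    · gcongr
      simpa using abs_add_le 1 (rjk x xh j k)
    · gcongr
      rcases abs_cases (rjk x xh j k) with h1 | h1 <;>
        linarith [le_abs_self (1 + rjk x xh j k)]

/-- The factors of the node polynomial at points dividing `[x p, x q]` and `[xh p, xh q]` in the
same ratio; `hsep` says that `x j` does not lie strictly between `x p` and `x q`. -/
lemma abs_sub_le_of_segment {n : ℕ} {x xh : Fin (n + 1) → ℝ} (hx : StrictMono x)
    {p q j : Fin (n + 1)} (hpq : p ≤ q) (hsep : j ≤ p ∨ q ≤ j) {s : ℝ} (hs0 : 0 ≤ s)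
    (hs1 : s ≤ 1) :
    |((1 - s) * xh p + s * xh q) - xh j| ≤
      (1 + (absR x xh j p + absR x xh j q)) * |((1 - s) * x p + s * x q) - x j| := by
  have hs1' : 0 ≤ 1 - s := by linarith
  have e1 : (1 - s) * xh p + s * xh q - xh j
      = (1 - s) * (xh p - xh j) + s * (xh q - xh j) := by ring
  have e2 : |(1 - s) * x p + s * x q - x j| = (1 - s) * |x p - x j| + s * |x q - x j| := by
    have e3 : (1 - s) * x p + s * x q - x j
      = (1 - s) * (x p - x j) + s * (x q - x j) := by ring
    rw [e3]
    rcases hsep with h | h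
    · have h1 : 0 ≤ x p - x j := sub_nonneg.2 (hx.monotone h)
      have h2 : 0 ≤ x q - x j := sub_nonneg.2 (hx.monotone (h.trans hpq))
      rw [abs_of_nonneg h1, abs_of_nonneg h2, abs_of_nonneg (by positivity)]
    · have h1 : x p - x j ≤ 0 := sub_nonpos.2 (hx.monotone (hpq.trans h))
      have h2 : x q - x j ≤ 0 := sub_nonpos.2 (hx.monotone h)
      rw [abs_of_nonpos h1, abs_of_nonpos h2, abs_of_nonpos (by nlinarith)]
      ring
  have bp := absR_nonneg x xh j p
  have bq := absR_nonneg x xh j q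
  rw [e1, e2]
  calc |(1 - s) * (xh p - xh j) + s * (xh q - xh j)|
      ≤ (1 - s) * |xh p - xh j| + s * |xh q - xh j| := by
        refine (abs_add_le _ _).trans_eq ?_
        rw [abs_mul, abs_mul, abs_of_nonneg hs0, abs_of_nonneg hs1']
    _ ≤ (1 - s) * ((1 + (absR x xh j p + absR x xh j q)) * |x p - x j|)
        + s * ((1 + (absR x xh j p + absR x xh j q)) * |x q - x j|) := by
        gcongr
        · refine (abs_diff_bounds xh hx j p).1.trans ?_
          gcongr; linarith
        · refine (abs_diff_bounds xh hx j q).1.trans ?_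
          gcongr; linarith
    _ = _ := by ring

lemma one_sub_sum_le_prod {ι : Type*} (s : Finset ι) (f : ι → ℝ) (h0 : ∀ i ∈ s, 0 ≤ f i)
    (h1 : ∀ i ∈ s, f i ≤ 1) : 1 - ∑ i ∈ s, f i ≤ ∏ i ∈ s, (1 - f i) := by
  classical
  induction s using Finset.induction_on with
  | empty => simp
  | insert a s ha ih =>
    rw [Finset.sum_insert ha, Finset.prod_insert ha]
    have hi := ih (fun i hi => h0 i (Finset.mem_insert_of_mem hi))
      (fun i hi => h1 i (Finset.mem_insert_of_mem hi))
    have a0 := h0 a (Finset.mem_insert_self _ _)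
    have a1 := h1 a (Finset.mem_insert_self _ _)
    have hs : 0 ≤ ∑ i ∈ s, f i :=
      Finset.sum_nonneg fun i hi => h0 i (Finset.mem_insert_of_mem hi)
    nlinarith

lemma prod_one_add_mul_le_one {ι : Type*} (s : Finset ι) (f : ι → ℝ) (h0 : ∀ i ∈ s, 0 ≤ f i) :
    (∏ i ∈ s, (1 + f i)) * (1 - ∑ i ∈ s, f i) ≤ 1 := by
  have h : ∏ i ∈ s, (1 + f i) ≤ Real.exp (∑ i ∈ s, f i) := by
    rw [Real.exp_sum]
    refine Finset.prod_le_prod (fun i hi => by linarith [h0 i hi]) fun i _ => ?_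
    linarith [Real.add_one_le_exp (f i)]
  have h' := Real.add_one_le_exp (-∑ i ∈ s, f i)
  have hp : 0 ≤ ∏ i ∈ s, (1 + f i) := Finset.prod_nonneg fun i hi => by linarith [h0 i hi]
  calc (∏ i ∈ s, (1 + f i)) * (1 - ∑ i ∈ s, f i)
      ≤ (∏ i ∈ s, (1 + f i)) * Real.exp (-∑ i ∈ s, f i) := by gcongr; linarith
    _ ≤ Real.exp (∑ i ∈ s, f i) * Real.exp (-∑ i ∈ s, f i) := by gcongr
    _ = 1 := by rw [← Real.exp_add]; simp

lemma abs_eval_basis {n : ℕ} (v : Fin (n + 1) → ℝ) (k : Fin (n + 1)) (t : ℝ) :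
    |(Lagrange.basis Finset.univ v k).eval t|
      = (∏ j ∈ Finset.univ.erase k, |t - v j|) / ∏ j ∈ Finset.univ.erase k, |v k - v j| := by
  rw [Lagrange.basis, Polynomial.eval_prod, Finset.abs_prod, ← Finset.prod_div_distrib]
  refine Finset.prod_congr rfl fun j _ => ?_
  simp [Lagrange.basisDivisor, abs_mul, abs_inv, div_eq_inv_mul]

lemma exists_consecutive {m : ℕ} (v : Fin (m + 2) → ℝ) {t : ℝ} (h0 : v 0 ≤ t)
    (h1 : t ≤ v (Fin.last (m + 1))) : ∃ i : Fin (m + 1), v i.castSucc ≤ t ∧ t ≤ v i.succ := by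
  by_contra! H
  have h : ∀ k, v k ≤ t := Fin.induction h0 fun i hi => (H i hi).le
  have := H (Fin.last m) (h _)
  rw [Fin.succ_last] at this
  linarith

/-- Comparison of single basis polynomials at points `th`, `t` whose distances to the nodes are
controlled by `a`. -/
lemma basis_le {n : ℕ} {x xh : Fin (n + 1) → ℝ} (hx : StrictMono x)
    {δ : ℝ} (hδ0 : 0 ≤ δ) (hδ1 : δ < 0.01) (k : Fin (n + 1)) (hk : ∑ j, absR x xh j k ≤ δ)
    {a : Fin (n + 1) → ℝ} (ha0 : ∀ j, 0 ≤ a j) (ha : ∑ j, a j ≤ 2 * δ) {t th : ℝ}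
    (ht : ∀ j, |th - xh j| ≤ (1 + a j) * |t - x j|) :
    |(Lagrange.basis Finset.univ xh k).eval th|
      ≤ (1 + 4 * δ) * |(Lagrange.basis Finset.univ x k).eval t| := by
  rw [abs_eval_basis, abs_eval_basis]
  set S := Finset.univ.erase k with hS
  have hnum : ∏ j ∈ S, |th - xh j| ≤ (∏ j ∈ S, (1 + a j)) * ∏ j ∈ S, |t - x j| := by
    rw [← Finset.prod_mul_distrib]
    exact Finset.prod_le_prod (fun _ _ => abs_nonneg _) fun j _ => ht j
  have hb1 : ∀ j, absR x xh j k ≤ 1 := fun j => by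
    have := Finset.single_le_sum (fun i _ => absR_nonneg x xh i k) (Finset.mem_univ j)
    norm_num at hδ1
    linarith
  have hden : (∏ j ∈ S, (1 - absR x xh j k)) * ∏ j ∈ S, |x k - x j|
      ≤ ∏ j ∈ S, |xh k - xh j| := by
    rw [← Finset.prod_mul_distrib]
    exact Finset.prod_le_prod
      (fun j _ => mul_nonneg (sub_nonneg.2 (hb1 j)) (abs_nonneg _))
      fun j _ => (abs_diff_bounds xh hx j k).2
  have hB : 1 - δ ≤ ∏ j ∈ S, (1 - absR x xh j k) := by
    refine le_trans ?_ (one_sub_sum_le_prod S _ (fun j _ => absR_nonneg x xh j k)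
      fun j _ => hb1 j)
    have : ∑ j ∈ S, absR x xh j k ≤ ∑ j, absR x xh j k :=
      Finset.sum_le_sum_of_subset_of_nonneg (Finset.subset_univ _)
        fun j _ _ => absR_nonneg x xh j k
    linarith
  have hP0 : 0 ≤ ∏ j ∈ S, (1 + a j) := Finset.prod_nonneg fun j _ => by linarith [ha0 j]
  have hA : (∏ j ∈ S, (1 + a j)) * (1 - 2 * δ) ≤ 1 := by
    refine le_trans ?_ (prod_one_add_mul_le_one S a fun j _ => ha0 j)
    have : ∑ j ∈ S, a j ≤ ∑ j, a j :=
      Finset.sum_le_sum_of_subset_of_nonneg (Finset.subset_univ _) fun j _ _ => ha0 j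
    gcongr
    linarith
  have hD : 0 < ∏ j ∈ S, |x k - x j| := Finset.prod_pos fun j hj =>
    abs_pos.2 (sub_ne_zero.2 fun e => Finset.ne_of_mem_erase hj (hx.injective e).symm)
  have hN : 0 ≤ ∏ j ∈ S, |t - x j| := Finset.prod_nonneg fun j _ => abs_nonneg _
  set P := ∏ j ∈ S, (1 + a j)
  set Q := ∏ j ∈ S, (1 - absR x xh j k)
  set D := ∏ j ∈ S, |x k - x j|
  set N := ∏ j ∈ S, |t - x j|
  norm_num at hδ1
  have hQ : 0 < Q := by linarith
  have hPQ : P ≤ (1 + 4 * δ) * Q := by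
    have h1 : 1 ≤ (1 - 2 * δ) * ((1 + 4 * δ) * (1 - δ)) := by
      nlinarith [mul_nonneg hδ0 hδ0, mul_nonneg (mul_nonneg hδ0 hδ0) hδ0]
    have h2 : P ≤ (1 + 4 * δ) * (1 - δ) := by
      have h3 : P * (1 - 2 * δ) ≤ ((1 + 4 * δ) * (1 - δ)) * (1 - 2 * δ) := by linarith
      exact le_of_mul_le_mul_right h3 (by linarith)
    exact h2.trans (by gcongr)
  calc (∏ j ∈ S, |th - xh j|) / ∏ j ∈ S, |xh k - xh j| ≤ (P * N) / (Q * D) := by gcongr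
    _ = (P / Q) * (N / D) := by field_simp
    _ ≤ (1 + 4 * δ) * (N / D) := by
      gcongr
      rwa [div_le_iff₀ hQ]

lemma bddAbove_lebesgue {n : ℕ} (v : Fin (n + 1) → ℝ) (a b : ℝ) :
    BddAbove (Set.range fun t : Set.Icc a b =>
      ∑ k, |(Lagrange.basis Finset.univ v k).eval (t : ℝ)|) := by
  refine (isCompact_range ?_).bddAbove
  fun_prop

theorem stmt_2 {n : ℕ} (x xh : Fin (n + 1) → ℝ)
    (hx : StrictMono x) (hxh : StrictMono xh)
    (h0 : xh 0 = x 0) (hn : xh (Fin.last n) = x (Fin.last n))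
    (δ : ℝ)
    (hδ : δ = Finset.univ.sup' Finset.univ_nonempty fun k =>
      ∑ j ∈ Finset.univ.erase k, |rjk x xh j k|)
    (hδ1 : δ < 0.01)
    (hclose : ∀ k j i : Fin (n + 1), j ≠ i → |xh k - x k| ≤ 0.1 * |x j - x i|) :
    leb xh (x 0) (x (Fin.last n)) ≤ (1 + 4 * δ) * leb x (x 0) (x (Fin.last n)) := by
  have hk : ∀ k, ∑ j, absR x xh j k ≤ δ := fun k => by
    rw [sum_absR, hδ]
    exact Finset.le_sup' (fun k => ∑ j ∈ Finset.univ.erase k, |rjk x xh j k|)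
      (Finset.mem_univ k)
  have hδ0 : 0 ≤ δ := (Finset.sum_nonneg fun j _ => absR_nonneg x xh j 0).trans (hk 0)
  have hle : x 0 ≤ x (Fin.last n) := hx.monotone (Fin.zero_le _)
  have : Nonempty (Set.Icc (x 0) (x (Fin.last n))) := ⟨⟨x 0, le_rfl, hle⟩⟩
  rcases n with _ | m
  · have hxx : xh = x := funext fun i => by rw [Fin.fin_one_eq_zero i, h0]
    rw [hxx]
    have : 0 ≤ leb x (x 0) (x (Fin.last 0)) :=
      Real.iSup_nonneg fun t => Finset.sum_nonneg fun k _ => abs_nonneg _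
    nlinarith [mul_nonneg hδ0 this]
  · refine ciSup_le fun ⟨th, hth0, hth1⟩ => ?_
    obtain ⟨i, hi0, hi1⟩ := exists_consecutive xh (h0 ▸ hth0) (hn ▸ hth1)
    have hlt : xh i.castSucc < xh i.succ := hxh i.castSucc_lt_succ
    -- `th` divides `[xh p, xh q]` in the ratio `s : 1 - s`, where `p`, `q` are `i`, `i + 1`.
    obtain ⟨s, hs0, hs1, hs⟩ : ∃ s : ℝ, 0 ≤ s ∧ s ≤ 1 ∧
        th = (1 - s) * xh i.castSucc + s * xh i.succ := by
      have hpos : 0 < xh i.succ - xh i.castSucc := sub_pos.2 hlt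
      refine ⟨(th - xh i.castSucc) / (xh i.succ - xh i.castSucc),
        div_nonneg (by linarith) hpos.le, (div_le_one hpos).2 (by linarith), ?_⟩
      field_simp
      ring
    have hs1' : 0 ≤ 1 - s := by linarith
    have hmem : (1 - s) * x i.castSucc + s * x i.succ ∈
        Set.Icc (x 0) (x (Fin.last (m + 1))) := by
      have a1 := hx.monotone (Fin.zero_le i.castSucc)
      have a2 := hx.monotone (Fin.zero_le i.succ)
      have a3 := hx.monotone (Fin.le_last i.castSucc)
      have a4 := hx.monotone (Fin.le_last i.succ)
      constructor <;> nlinarith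
    refine le_trans ?_ (mul_le_mul_of_nonneg_left
      (le_ciSup (bddAbove_lebesgue x _ _) ⟨_, hmem⟩) (by linarith : 0 ≤ 1 + 4 * δ))
    rw [Finset.mul_sum]
    refine Finset.sum_le_sum fun k _ => ?_
    refine basis_le hx hδ0 hδ1 k (hk k)
      (a := fun j => absR x xh j i.castSucc + absR x xh j i.succ)
      (fun j => add_nonneg (absR_nonneg _ _ _ _) (absR_nonneg _ _ _ _)) ?_ fun j => ?_
    · rw [Finset.sum_add_distrib]
      linarith [hk i.castSucc, hk i.succ]
    · have hsep : j ≤ i.castSucc ∨ i.succ ≤ j := by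
        simp only [Fin.le_def, Fin.val_castSucc, Fin.val_succ]
        omega
      simp only [hs]
      exact abs_sub_le_of_segment hx i.castSucc_lt_succ.le hsep hs0 hs1
end

section
/- Let x₀ < ⋯ < xₙ be real nodes, let x̂₀ = x₀ < x̂₁ < ⋯ < x̂_{n−1} < x̂ₙ = xₙ, and let y ∈ ℝ^{n+1}. Then for every real t distinct from all x̂_k, the first barycentric formula with nodes x̂ and exact weights λ(x) satisfies p(t; x̂, y, λ(x)) = P_{y + yz}(t) = P_y(t) + P_{yz}(t), where z_k = z_k(x, x̂). -/
/-- The first barycentric formula `p(t; x̂, y, w)`. -/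
noncomputable def firstForm {n : ℕ} (xh y w : Fin (n + 1) → ℝ) (t : ℝ) : ℝ :=
  (∏ k, (t - xh k)) * ∑ k, w k * y k / (t - xh k)

theorem stmt_3 {n : ℕ} (x xh y : Fin (n + 1) → ℝ)
    (hx : StrictMono x) (hxh : StrictMono xh)
    (h0 : xh 0 = x 0) (hn : xh (Fin.last n) = x (Fin.last n))
    (t : ℝ) (ht : ∀ k, t ≠ xh k) :
    firstForm xh y (lam x) t =
        (Lagrange.interpolate Finset.univ xh (fun k => y k + y k * zk x xh k)).eval t ∧
      firstForm xh y (lam x) t =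
        (Lagrange.interpolate Finset.univ xh y).eval t +
          (Lagrange.interpolate Finset.univ xh (fun k => y k * zk x xh k)).eval t := by
  have hlam : ∀ k, lam xh k = Lagrange.nodalWeight Finset.univ xh k := fun k => by
    simp [lam, Lagrange.nodalWeight, Finset.prod_inv_distrib]
  have hne : ∀ k, lam xh k ≠ 0 := fun k => by
    rw [hlam]
    exact Lagrange.nodalWeight_ne_zero hxh.injective.injOn (Finset.mem_univ k)
  have key : firstForm xh y (lam x) t =
      (Lagrange.interpolate Finset.univ xh (fun k => y k + y k * zk x xh k)).eval t := by
    rw [Lagrange.eval_interpolate_not_at_node _ fun k _ => ht k, Lagrange.eval_nodal, firstForm]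
    congr 1
    refine Finset.sum_congr rfl fun k _ => ?_
    -- Since `1 + z_k = λ_k(x) / λ_k(x̂)`, the weights `λ_k(x̂)` cancel.
    have hw : lam xh k * (y k + y k * zk x xh k) = lam x k * y k := by
      have := hne k
      rw [zk]
      field_simp
      ring
    rw [← hlam, div_eq_mul_inv, ← hw]
    ring
  refine ⟨key, ?_⟩
  rw [key, ← Polynomial.eval_add, ← map_add]
  rfl
end

section
/- Let x₀ < ⋯ < xₙ be real nodes, let x̂₀ = x₀ < x̂₁ < ⋯ < x̂_{n−1} < x̂ₙ = xₙ, let y ∈ ℝ^{n+1}, and set z_k = z_k(x, x̂). Assume Λ(x̂)·‖z‖_∞ < 1, where Λ(x̂) is the Lebesgue constant of x̂ over [x₀, xₙ]. Then for every t ∈ [x₀, xₙ] distinct from all x̂_k, the second barycentric formula with nodes x̂ and exact weights λ(x) satisfies |E(t; y, z)|/(1 + Λ(x̂)‖z‖_∞) ≤ |q(t; x̂, y, λ(x)) − P_y(t)| ≤ |E(t; y, z)|/(1 − Λ(x̂)‖z‖_∞). -/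
/-- The second barycentric formula `q(t; x̂, y, w)`. -/
noncomputable def secondForm {n : ℕ} (xh y w : Fin (n + 1) → ℝ) (t : ℝ) : ℝ :=
  (∑ k, w k * y k / (t - xh k)) / (∑ k, w k / (t - xh k))

/-- The Error Polynomial `E(t; y, z) = P_{yz}(t) - P_y(t)·P_z(t)`. -/
noncomputable def errP {n : ℕ} (xh y z : Fin (n + 1) → ℝ) (t : ℝ) : ℝ :=
  (Lagrange.interpolate Finset.univ xh (fun k => y k * z k)).eval t -
    (Lagrange.interpolate Finset.univ xh y).eval t *
      (Lagrange.interpolate Finset.univ xh z).eval t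

theorem eval_interpolate_eq_sum {n : ℕ} (xh y : Fin (n + 1) → ℝ) (t : ℝ) :
    (Lagrange.interpolate Finset.univ xh y).eval t =
      ∑ k, y k * (Lagrange.basis Finset.univ xh k).eval t := by
  simp [Lagrange.interpolate_apply, Polynomial.eval_finsetSum]

theorem lam_eq_nodalWeight {n : ℕ} (x : Fin (n + 1) → ℝ) (k : Fin (n + 1)) :
    lam x k = Lagrange.nodalWeight Finset.univ x k := by
  simp [lam, Lagrange.nodalWeight]

theorem lam_ne_zero {n : ℕ} {x : Fin (n + 1) → ℝ} (hx : StrictMono x) (k : Fin (n + 1)) :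
    lam x k ≠ 0 := by
  rw [lam_eq_nodalWeight]
  exact Lagrange.nodalWeight_ne_zero hx.injective.injOn (Finset.mem_univ k)

/-- The supremum defining the Lebesgue constant is over a bounded family, so it dominates the
Lebesgue function at each point of the interval. -/
theorem lebesgue_function_le_leb {n : ℕ} (xh : Fin (n + 1) → ℝ) {a b t : ℝ}
    (ht : t ∈ Set.Icc a b) :
    ∑ k, |(Lagrange.basis Finset.univ xh k).eval t| ≤ leb xh a b := by
  have hc : Continuous fun s : Set.Icc a b =>
      ∑ k, |(Lagrange.basis Finset.univ xh k).eval (s : ℝ)| := by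
    refine continuous_finsetSum _ fun k _ => ?_
    exact ((Lagrange.basis Finset.univ xh k).continuous.comp continuous_subtype_val).abs
  exact le_ciSup (isCompact_range hc).bddAbove (⟨t, ht⟩ : Set.Icc a b)

theorem abs_eval_interpolate_le {n : ℕ} (xh z : Fin (n + 1) → ℝ) {a b t : ℝ}
    (ht : t ∈ Set.Icc a b) :
    |(Lagrange.interpolate Finset.univ xh z).eval t| ≤
      leb xh a b * (Finset.univ.sup' Finset.univ_nonempty fun k => |z k|) := by
  set M := Finset.univ.sup' Finset.univ_nonempty fun k => |z k|
  have hM : ∀ k, |z k| ≤ M := fun k =>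
    Finset.le_sup' (fun k => |z k|) (Finset.mem_univ k)
  have hM0 : 0 ≤ M := (abs_nonneg _).trans (hM 0)
  rw [eval_interpolate_eq_sum]
  calc |∑ k, z k * (Lagrange.basis Finset.univ xh k).eval t|
      ≤ ∑ k, |z k * (Lagrange.basis Finset.univ xh k).eval t| :=
        Finset.abs_sum_le_sum_abs _ _
    _ ≤ ∑ k, M * |(Lagrange.basis Finset.univ xh k).eval t| := by
        refine Finset.sum_le_sum fun k _ => ?_
        rw [abs_mul]
        exact mul_le_mul_of_nonneg_right (hM k) (abs_nonneg _)
    _ = (∑ k, |(Lagrange.basis Finset.univ xh k).eval t|) * M := by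
        rw [← Finset.mul_sum, mul_comm]
    _ ≤ leb xh a b * M :=
        mul_le_mul_of_nonneg_right (lebesgue_function_le_leb xh ht) hM0

/-- Exact error of the second barycentric formula with perturbed weights. -/
theorem secondForm_sub_eq {n : ℕ} (x xh y : Fin (n + 1) → ℝ) (hxh : StrictMono xh)
    {t : ℝ} (ht : ∀ k, t ≠ xh k)
    (hD : 1 + (Lagrange.interpolate Finset.univ xh (zk x xh)).eval t ≠ 0) :
    secondForm xh y (lam x) t - (Lagrange.interpolate Finset.univ xh y).eval t =
      errP xh y (zk x xh) t /
        (1 + (Lagrange.interpolate Finset.univ xh (zk x xh)).eval t) := by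
  set ω := (Lagrange.nodal Finset.univ xh).eval t
  have hω : ω ≠ 0 := Lagrange.eval_nodal_not_at_node fun k _ => ht k
  have hterm : ∀ k, ω * (lam x k / (t - xh k)) =
      (1 + zk x xh k) * (Lagrange.basis Finset.univ xh k).eval t := by
    intro k
    have hl := lam_ne_zero hxh k
    rw [Lagrange.eval_basis_not_at_node (Finset.mem_univ k) (ht k), ← lam_eq_nodalWeight, zk]
    field_simp
    ring
  have hone : ∑ k, (Lagrange.basis Finset.univ xh k).eval t = 1 := by
    rw [← Polynomial.eval_finsetSum,
      Lagrange.sum_basis hxh.injective.injOn Finset.univ_nonempty, Polynomial.eval_one]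
  have hden : ω * ∑ k, lam x k / (t - xh k) =
      1 + (Lagrange.interpolate Finset.univ xh (zk x xh)).eval t := by
    rw [eval_interpolate_eq_sum, ← hone, ← Finset.sum_add_distrib, Finset.mul_sum]
    refine Finset.sum_congr rfl fun k _ => ?_
    rw [hterm]
    ring
  have hnum : ω * ∑ k, lam x k * y k / (t - xh k) =
      (Lagrange.interpolate Finset.univ xh y).eval t +
        (Lagrange.interpolate Finset.univ xh (fun k => y k * zk x xh k)).eval t := by
    rw [eval_interpolate_eq_sum, eval_interpolate_eq_sum, ← Finset.sum_add_distrib,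
      Finset.mul_sum]
    refine Finset.sum_congr rfl fun k _ => ?_
    linear_combination y k * hterm k
  rw [secondForm, ← mul_div_mul_left _ _ hω, hnum, hden, errP]
  field_simp
  ring

theorem stmt_5 {n : ℕ} (x xh y : Fin (n + 1) → ℝ)
    (hx : StrictMono x) (hxh : StrictMono xh)
    (h0 : xh 0 = x 0) (hn : xh (Fin.last n) = x (Fin.last n))
    (hsmall : leb xh (x 0) (x (Fin.last n)) *
      (Finset.univ.sup' Finset.univ_nonempty fun k => |zk x xh k|) < 1)
    (t : ℝ) (ht : t ∈ Set.Icc (x 0) (x (Fin.last n))) (ht' : ∀ k, t ≠ xh k) :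
    |errP xh y (zk x xh) t| /
        (1 + leb xh (x 0) (x (Fin.last n)) *
          (Finset.univ.sup' Finset.univ_nonempty fun k => |zk x xh k|)) ≤
      |secondForm xh y (lam x) t - (Lagrange.interpolate Finset.univ xh y).eval t| ∧
    |secondForm xh y (lam x) t - (Lagrange.interpolate Finset.univ xh y).eval t| ≤
      |errP xh y (zk x xh) t| /
        (1 - leb xh (x 0) (x (Fin.last n)) *
          (Finset.univ.sup' Finset.univ_nonempty fun k => |zk x xh k|)) := by
  set B := leb xh (x 0) (x (Fin.last n)) *
    (Finset.univ.sup' Finset.univ_nonempty fun k => |zk x xh k|)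
  have hP := abs_eval_interpolate_le xh (zk x xh) ht
  obtain ⟨hlo, hhi⟩ := abs_le.mp hP
  have hpos : 0 < 1 + (Lagrange.interpolate Finset.univ xh (zk x xh)).eval t := by linarith
  rw [secondForm_sub_eq x xh y hxh ht' hpos.ne', abs_div, abs_of_pos hpos]
  constructor
  · exact div_le_div_of_nonneg_left (abs_nonneg _) hpos (by linarith)
  · exact div_le_div_of_nonneg_left (abs_nonneg _) (by linarith) (by linarith)
end

section
/- Let x₀ < ⋯ < xₙ be real nodes, let x̂₀ = x₀ < x̂₁ < ⋯ < x̂_{n−1} < x̂ₙ = xₙ, let y ∈ ℝ^{n+1}, and set z_k = z_k(x, x̂). Let ĉ_k := (x̂_{k−1} + x̂_k)/2 for 1 ≤ k ≤ n, and let v̂ be the family of 2n+1 points consisting of x̂₀, …, x̂ₙ together with ĉ₁, …, ĉₙ. Then max_{t ∈ [x₀, xₙ]} |E(t; y, z)| ≤ Λ(v̂)·max_{1≤k≤n} |E(ĉ_k; y, z)|, where Λ(v̂) is the Lebesgue constant of the 2n+1 points v̂ over [x₀, xₙ]. -/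
/-- The midpoints `ĉ_k = (x̂_{k-1} + x̂_k)/2`; `ch xh k` is the midpoint of the
interval `[x̂_k, x̂_{k+1}]`, i.e. `ĉ_{k+1}` for `k = 0, …, n-1`. -/
noncomputable def ch {n : ℕ} (xh : Fin (n + 1) → ℝ) (k : Fin n) : ℝ :=
  (xh k.castSucc + xh k.succ) / 2

/-- By compactness of `[a, b]`, the supremum defining `leb` is that of a bounded set, not the junk
value `0`. -/
lemma le_leb {ι : Type*} [Fintype ι] [DecidableEq ι] (v : ι → ℝ) (a b t : ℝ)
    (ht : t ∈ Set.Icc a b) :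
    ∑ k, |(Lagrange.basis Finset.univ v k).eval t| ≤ leb v a b := by
  have hc : Continuous fun t : Set.Icc a b =>
      ∑ k, |(Lagrange.basis Finset.univ v k).eval (t : ℝ)| :=
    continuous_finsetSum _ fun k _ =>
      ((Lagrange.basis Finset.univ v k).continuous.comp continuous_subtype_val).abs
  exact le_ciSup (isCompact_range hc).bddAbove ⟨t, ht⟩

lemma ch_bounds {n : ℕ} {xh : Fin (n + 1) → ℝ} (hxh : StrictMono xh) (k : Fin n) :
    xh k.castSucc < ch xh k ∧ ch xh k < xh k.succ := by
  have h := hxh (Fin.castSucc_lt_succ (i := k))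
  unfold ch
  constructor <;> linarith

lemma ch_strictMono {n : ℕ} {xh : Fin (n + 1) → ℝ} (hxh : StrictMono xh) :
    StrictMono (ch xh) := by
  intro i j hij
  have h : xh i.succ ≤ xh j.castSucc := hxh.monotone (Fin.succ_le_castSucc_iff.2 hij)
  exact ((ch_bounds hxh i).2.trans_le h).trans (ch_bounds hxh j).1

lemma nodes_injective {n : ℕ} {xh : Fin (n + 1) → ℝ} (hxh : StrictMono xh) :
    Function.Injective (Sum.elim xh (ch xh) : Fin (n + 1) ⊕ Fin n → ℝ) := by
  refine hxh.injective.sumElim (ch_strictMono hxh).injective fun i k h => ?_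
  obtain ⟨h1, h2⟩ := ch_bounds hxh k
  rw [← h] at h1 h2
  have h3 := hxh.lt_iff_lt.1 h1
  have h4 := hxh.lt_iff_lt.1 h2
  simp only [Fin.lt_def, Fin.val_castSucc, Fin.val_succ] at h3 h4
  omega

lemma errP_node {n : ℕ} {xh : Fin (n + 1) → ℝ} (hxh : StrictMono xh) (y z : Fin (n + 1) → ℝ)
    (k : Fin (n + 1)) : errP xh y z (xh k) = 0 := by
  have hi : Set.InjOn xh (Finset.univ : Finset (Fin (n + 1))) := hxh.injective.injOn
  simp only [errP, Lagrange.eval_interpolate_at_node _ hi (Finset.mem_univ k), sub_self]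

/-- Lagrange's interpolation formula for the error polynomial at the points `v̂`. -/
lemma errP_eq_sum {n : ℕ} {xh : Fin (n + 1) → ℝ} (hxh : StrictMono xh) (y z : Fin (n + 1) → ℝ)
    (t : ℝ) :
    errP xh y z t = ∑ k : Fin (n + 1) ⊕ Fin n, errP xh y z (Sum.elim xh (ch xh) k) *
      (Lagrange.basis Finset.univ (Sum.elim xh (ch xh)) k).eval t := by
  have hi : Set.InjOn xh (Finset.univ : Finset (Fin (n + 1))) := hxh.injective.injOn
  have hnat (r : Fin (n + 1) → ℝ) : (Lagrange.interpolate Finset.univ xh r).natDegree ≤ n := by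
    refine Polynomial.natDegree_le_of_degree_le ?_
    simpa using Lagrange.degree_interpolate_le r hi
  set p : Polynomial ℝ := Lagrange.interpolate Finset.univ xh (fun k => y k * z k) -
    Lagrange.interpolate Finset.univ xh y * Lagrange.interpolate Finset.univ xh z with hp
  have hev (s : ℝ) : errP xh y z s = p.eval s := by simp [errP, hp]
  have hdeg : p.natDegree ≤ 2 * n := by
    refine (Polynomial.natDegree_sub_le _ _).trans (max_le ((hnat _).trans (by omega)) ?_)
    exact (Polynomial.natDegree_mul_le_of_le (hnat y) (hnat z)).trans (by omega)
  have hlt : p.degree < (Finset.univ : Finset (Fin (n + 1) ⊕ Fin n)).card := by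
    refine (Polynomial.degree_le_of_natDegree_le hdeg).trans_lt ?_
    have h : 2 * n < (Finset.univ : Finset (Fin (n + 1) ⊕ Fin n)).card := by simp; omega
    exact_mod_cast h
  have key := Lagrange.eq_interpolate (nodes_injective hxh).injOn hlt
  simp only [hev]
  conv_lhs => rw [key]
  simp only [Lagrange.interpolate_apply, Polynomial.eval_finsetSum, Polynomial.eval_mul,
    Polynomial.eval_C]

theorem stmt_7 {n : ℕ} (hn0 : 0 < n) (x xh y : Fin (n + 1) → ℝ)
    (hx : StrictMono x) (hxh : StrictMono xh)
    (h0 : xh 0 = x 0) (hn : xh (Fin.last n) = x (Fin.last n)) :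
    (⨆ t : Set.Icc (x 0) (x (Fin.last n)), |errP xh y (zk x xh) (t : ℝ)|) ≤
      leb (Sum.elim xh (ch xh) : Fin (n + 1) ⊕ Fin n → ℝ) (x 0) (x (Fin.last n)) *
        (Finset.univ.sup' ⟨⟨0, hn0⟩, Finset.mem_univ _⟩
          fun k : Fin n => |errP xh y (zk x xh) (ch xh k)|) := by
  have : Nonempty (Set.Icc (x 0) (x (Fin.last n))) :=
    ⟨⟨x 0, le_refl _, hx.monotone (Fin.zero_le _)⟩⟩
  refine ciSup_le fun t => ?_
  generalize zk x xh = z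
  set M := Finset.univ.sup' ⟨⟨0, hn0⟩, Finset.mem_univ _⟩
    fun k : Fin n => |errP xh y z (ch xh k)| with hM
  have hle (k : Fin n) : |errP xh y z (ch xh k)| ≤ M :=
    Finset.le_sup' (fun k : Fin n => |errP xh y z (ch xh k)|) (Finset.mem_univ k)
  have hM0 : 0 ≤ M := (abs_nonneg _).trans (hle ⟨0, hn0⟩)
  have hv (k : Fin (n + 1) ⊕ Fin n) : |errP xh y z (Sum.elim xh (ch xh) k)| ≤ M := by
    rcases k with k | k
    · simpa [errP_node hxh] using hM0
    · exact hle k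
  rw [errP_eq_sum hxh y z t]
  calc _ ≤ ∑ k : Fin (n + 1) ⊕ Fin n, |errP xh y z (Sum.elim xh (ch xh) k) *
        (Lagrange.basis Finset.univ (Sum.elim xh (ch xh)) k).eval (t : ℝ)| :=
        Finset.abs_sum_le_sum_abs _ _
    _ ≤ ∑ k : Fin (n + 1) ⊕ Fin n,
        |(Lagrange.basis Finset.univ (Sum.elim xh (ch xh)) k).eval (t : ℝ)| * M := by
        refine Finset.sum_le_sum fun k _ => ?_
        rw [abs_mul, mul_comm]
        exact mul_le_mul_of_nonneg_left (hv k) (abs_nonneg _)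
    _ ≤ _ := by
        rw [← Finset.sum_mul]
        exact mul_le_mul_of_nonneg_right (le_leb _ _ _ _ t.2) hM0
end

section
/- Let v ∈ ℝⁿ satisfy ‖v‖₁ := Σ_{k=1}^n |v_k| < 1 and set s := Σ_{k=1}^n v_k. Then 0 ≤ ∏_{k=1}^n 1/(1 + v_k) − (1 − s) ≤ ‖v‖₁²/(1 − ‖v‖₁). -/
/-!
Write `a = ∑ |v k|` and `s = ∑ v k`. The lower bound follows from `1 + x ≤ exp x`, which gives
`∏ (1 + v k)⁻¹ ≥ exp (-s) ≥ 1 - s`.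

Since `a ^ 2 / (1 - a) = (1 - a)⁻¹ - 1 - a`, the upper bound says
`∏ (1 + v k)⁻¹ ≤ (1 - a)⁻¹ - (a + s)`. In this form it is proved by adding the factors one at a
time; `upper_step` is the inequality behind the induction step, where `d = a + s ∈ [0, 2 a]`.
-/

/-- Adding an entry `x` replaces `a` by `a + |x|` and `d = a + s` by `d + |x| + x`. -/
lemma upper_step {a d x : ℝ} (ha : 0 ≤ a) (hd0 : 0 ≤ d) (hd : d ≤ 2 * a) (hax : a + |x| < 1) :
    ((1 - a)⁻¹ - d) * (1 + x)⁻¹ ≤ (1 - (a + |x|))⁻¹ - (d + |x| + x) := by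
  have ht0 := abs_nonneg x
  have hp : (1 - a)⁻¹ * (1 - |x|)⁻¹ ≤ (1 - (a + |x|))⁻¹ := by
    rw [← mul_inv]
    apply inv_anti₀ (by linarith)
    nlinarith
  refine le_trans ?_ (sub_le_sub_right hp _)
  have ha1 : 1 + a ≤ (1 - a)⁻¹ := by
    rw [inv_eq_one_div, le_div_iff₀ (by linarith)]
    nlinarith
  have ha1' : 0 < 1 - a := by linarith
  generalize (1 - a)⁻¹ = q at *
  rcases le_total 0 x with hx | hx
  · rw [abs_of_nonneg hx] at *
    have h2 : 0 < 1 - x := by linarith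
    have h3 : 0 < 1 + x := by linarith
    -- The difference of the two sides is at least `2 x (q / (1 - x ^ 2) - 1 - a / (1 + x))`,
    -- which is nonnegative because `q ≥ 1 + a`.
    have key : q * (1 - x)⁻¹ - (d + x + x) - (q - d) * (1 + x)⁻¹
        = x * (2 * (q - (1 + a)) + 2 * (1 + a) * x ^ 2 + (2 * a - d) * (1 - x)
            + 2 * a * x * (1 - x)) / ((1 - x) * (1 + x)) := by
      field_simp
      ring
    have : 0 ≤ x * (2 * (q - (1 + a)) + 2 * (1 + a) * x ^ 2 + (2 * a - d) * (1 - x)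
            + 2 * a * x * (1 - x)) / ((1 - x) * (1 + x)) := by
      have := sub_nonneg.2 ha1
      have := sub_nonneg.2 hd
      positivity
    linarith
  · rw [abs_of_nonpos hx] at *
    have h3 : 1 ≤ (1 + x)⁻¹ := (one_le_inv₀ (by linarith)).2 (by linarith)
    rw [sub_neg_eq_add]
    nlinarith

lemma upper_bound {ι : Type*} (v : ι → ℝ) (S : Finset ι) (h1 : ∑ k ∈ S, |v k| < 1) :
    ∏ k ∈ S, (1 + v k)⁻¹ ≤ (1 - ∑ k ∈ S, |v k|)⁻¹ - (∑ k ∈ S, |v k| + ∑ k ∈ S, v k) := by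
  classical
  induction S using Finset.induction_on with
  | empty => simp
  | insert i S hi ih =>
    simp only [Finset.sum_insert hi, Finset.prod_insert hi] at h1 ⊢
    have hS := ih (by linarith [abs_nonneg (v i)])
    have hs := abs_le.1 (Finset.abs_sum_le_sum_abs v S)
    have ha : 0 ≤ ∑ k ∈ S, |v k| := Finset.sum_nonneg fun _ _ => abs_nonneg _
    have hx : 0 < 1 + v i := by linarith [neg_abs_le (v i)]
    have h := upper_step (x := v i) ha (d := ∑ k ∈ S, |v k| + ∑ k ∈ S, v k)
      (by linarith) (by linarith) (by linarith)
    have h' := mul_le_mul_of_nonneg_right hS (inv_pos.2 hx).le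
    rw [mul_comm, add_comm |v i|]
    linarith

theorem stmt_12 {n : ℕ} (v : Fin n → ℝ) (h1 : ∑ k, |v k| < 1) :
    0 ≤ (∏ k, (1 + v k)⁻¹) - (1 - ∑ k, v k) ∧
      (∏ k, (1 + v k)⁻¹) - (1 - ∑ k, v k) ≤
        (∑ k, |v k|) ^ 2 / (1 - ∑ k, |v k|) := by
  constructor
  · have hpos : ∀ k, 0 < 1 + v k := fun k => by
      have := Finset.single_le_sum (f := fun k => |v k|) (fun _ _ => abs_nonneg _)
        (Finset.mem_univ k)
      linarith [neg_abs_le (v k)]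
    have h : Real.exp (-∑ k, v k) ≤ ∏ k, (1 + v k)⁻¹ := by
      rw [← Finset.sum_neg_distrib, Real.exp_sum]
      refine Finset.prod_le_prod (fun _ _ => (Real.exp_pos _).le) fun k _ => ?_
      rw [Real.exp_neg]
      exact inv_anti₀ (hpos k) (by linarith [Real.add_one_le_exp (v k)])
    linarith [Real.add_one_le_exp (-∑ k, v k)]
  · have h := upper_bound v Finset.univ h1
    have h2 : 1 - ∑ k, |v k| ≠ 0 := (sub_pos.2 h1).ne'
    have e : (∑ k, |v k|) ^ 2 / (1 - ∑ k, |v k|)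
        = (1 - ∑ k, |v k|)⁻¹ - 1 - ∑ k, |v k| := by
      field_simp
      ring
    linarith
end

section
/- Let n ≥ 2 and let x_j = −cos(jπ/n) be the Chebyshev points of the second kind. Then for every integer k with 1 ≤ k ≤ n/2, Σ_{j=0}^{k−1} 1/(x_k − x_j) ≤ (1 + k·log(4k − 1))/(2·sin(kπ/n)·sin(kπ/(2n))) ≤ (n²/(4√2·k²))·(1 + k·log(4k − 1)), where log is the natural logarithm. -/
/-!
Put `θ = kπ/n ≤ π/2` and `t = j/k`. The product formula gives
`x_k - x_j = cos (tθ) - cos θ = 2 sin ((1+t)θ/2) sin ((1-t)θ/2)`. By concavity of `sin` on `[0, π]`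
(`smul_sin_le`), `sin ((1+t)θ/2) ≥ (1+t)/2 · sin θ` and `sin ((1-t)θ/2) ≥ (1-t) sin (θ/2)`, hence
`1/(x_k - x_j) ≤ (2k²/(k² - j²)) / (2 sin θ sin (θ/2))`.
Since `2k²/(k² - j²) = k (1/(k-j) + 1/(k+j))`, the sum of these numerators over `j < k` is
`1 + k H_{2k-1}`, and `H_m ≤ log (2m+1)` yields the first inequality.

The second one follows from the same concavity bound, which gives `sin θ ≥ 2k/n` (comparison with
`sin (π/2)`) and `sin (θ/2) ≥ √2 k/n` (comparison with `sin (π/4)`).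
-/

/-- Concavity of `sin` on `[0, π]` together with `sin 0 = 0`. -/
lemma smul_sin_le {s b : ℝ} (hs0 : 0 ≤ s) (hs1 : s ≤ 1) (hb0 : 0 ≤ b) (hb1 : b ≤ Real.pi) :
    s * Real.sin b ≤ Real.sin (s * b) := by
  have h := strictConcaveOn_sin_Icc.concaveOn.2 (x := b) ⟨hb0, hb1⟩ (y := 0)
    ⟨le_rfl, Real.pi_pos.le⟩ hs0 (sub_nonneg.2 hs1) (by ring)
  simpa using h

lemma sum_inv_le_log (m : ℕ) :
    ∑ i ∈ Finset.range m, 1 / ((i : ℝ) + 1) ≤ Real.log (2 * m + 1) := by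
  induction m with
  | zero => simp
  | succ m ih =>
    rw [Finset.sum_range_succ]
    have hpos : (0 : ℝ) < 2 * m + 1 := by positivity
    -- `2y/(y+2) ≤ log (1+y)` at `y = 2/(2m+1)`, where the left side is `1/(m+1)`.
    have h := Real.le_log_one_add_of_nonneg (x := 2 / (2 * (m : ℝ) + 1)) (by positivity)
    have e1 : 2 * (2 / (2 * (m : ℝ) + 1)) / (2 / (2 * (m : ℝ) + 1) + 2) = 1 / ((m : ℝ) + 1) := by
      field_simp
      ring
    have e2 : 1 + 2 / (2 * (m : ℝ) + 1) = (2 * ((m + 1 : ℕ) : ℝ) + 1) / (2 * m + 1) := by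
      push_cast
      field_simp
      ring
    rw [e1, e2, Real.log_div (by positivity) hpos.ne'] at h
    linarith

/-- The sum on the left equals `H_{2k-1} + 1/k`: the two families of denominators are `1, …, k` and
`k, …, 2k-1`, so `k` occurs twice. -/
lemma sum_inv_sub_add_le {k : ℕ} (hk : 1 ≤ k) :
    ∑ j ∈ Finset.range k, (1 / ((k : ℝ) - j) + 1 / ((k : ℝ) + j)) ≤
      1 / k + Real.log (4 * k - 1) := by
  obtain ⟨p, rfl⟩ : ∃ p, k = p + 1 := ⟨k - 1, by omega⟩
  rw [Finset.sum_add_distrib]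
  have h1 : ∑ j ∈ Finset.range (p + 1), 1 / (((p + 1 : ℕ) : ℝ) - j) =
      ∑ i ∈ Finset.range (p + 1), 1 / ((i : ℝ) + 1) := by
    rw [← Finset.sum_range_reflect]
    refine Finset.sum_congr rfl fun j hj => ?_
    have hj' : j ≤ p := by simpa [Nat.lt_succ_iff] using hj
    have : p + 1 - 1 - j = p - j := by omega
    rw [this, Nat.cast_sub hj']
    push_cast
    congr 1
    ring
  have h2 := Finset.sum_range_succ' (fun j : ℕ => 1 / (((p + 1 : ℕ) : ℝ) + j)) p
  have h3 := sum_inv_le_log ((p + 1) + p)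
  rw [Finset.sum_range_add] at h3
  have h4 : ∑ j ∈ Finset.range p, 1 / (((p + 1 : ℕ) : ℝ) + (j + 1 : ℕ)) =
      ∑ j ∈ Finset.range p, 1 / (((p + 1 + j : ℕ) : ℝ) + 1) := by
    refine Finset.sum_congr rfl fun j _ => ?_
    push_cast
    congr 1
    ring
  have h5 : 2 * ((p + 1 + p : ℕ) : ℝ) + 1 = 4 * ((p + 1 : ℕ) : ℝ) - 1 := by
    push_cast
    ring
  rw [h5] at h3
  rw [h1, h2, h4]
  simp only [Nat.cast_zero, add_zero]
  linarith

lemma cos_sub_cos_ge {θ t : ℝ} (h0 : 0 < θ) (h1 : θ ≤ Real.pi / 2) (ht0 : 0 ≤ t) (ht1 : t < 1) :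
    (1 - t ^ 2) * (Real.sin θ * Real.sin (θ / 2)) ≤ Real.cos (t * θ) - Real.cos θ := by
  have hpi := Real.pi_pos
  have e : Real.cos (t * θ) - Real.cos θ =
      2 * (Real.sin ((1 + t) / 2 * θ) * Real.sin ((1 - t) * (θ / 2))) := by
    rw [Real.cos_sub_cos, show (t * θ + θ) / 2 = (1 + t) / 2 * θ by ring,
      show (t * θ - θ) / 2 = -((1 - t) * (θ / 2)) by ring, Real.sin_neg]
    ring
  have a1 : (1 + t) / 2 * Real.sin θ ≤ Real.sin ((1 + t) / 2 * θ) :=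
    smul_sin_le (by linarith) (by linarith) h0.le (by linarith)
  have a2 : (1 - t) * Real.sin (θ / 2) ≤ Real.sin ((1 - t) * (θ / 2)) :=
    smul_sin_le (by linarith) (by linarith) (by linarith) (by linarith)
  have s1 : 0 < Real.sin θ := Real.sin_pos_of_pos_of_lt_pi h0 (by linarith)
  have s2 : 0 < Real.sin (θ / 2) := Real.sin_pos_of_pos_of_lt_pi (by linarith) (by linarith)
  have b1 : 0 ≤ (1 + t) / 2 * Real.sin θ := by positivity
  have b2 : 0 ≤ (1 - t) * Real.sin (θ / 2) := mul_nonneg (by linarith) s2.le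
  have := mul_le_mul a1 a2 b2 (b1.trans a1)
  rw [e]
  linarith

theorem stmt_14 {n : ℕ} (hn : 2 ≤ n) (x : ℕ → ℝ)
    (hx : ∀ j, x j = -Real.cos (j * Real.pi / n))
    (k : ℕ) (hk1 : 1 ≤ k) (hk2 : 2 * k ≤ n) :
    (∑ j ∈ Finset.range k, 1 / (x k - x j)) ≤
        (1 + k * Real.log (4 * k - 1)) /
          (2 * Real.sin (k * Real.pi / n) * Real.sin (k * Real.pi / (2 * n))) ∧
      (1 + k * Real.log (4 * k - 1)) /
          (2 * Real.sin (k * Real.pi / n) * Real.sin (k * Real.pi / (2 * n))) ≤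
        n ^ 2 / (4 * Real.sqrt 2 * k ^ 2) * (1 + k * Real.log (4 * k - 1)) := by
  have hpi := Real.pi_pos
  have hn0 : (0 : ℝ) < n := by exact_mod_cast (by omega : 0 < n)
  have hk0 : (0 : ℝ) < k := by exact_mod_cast hk1
  have hk1' : (1 : ℝ) ≤ k := by exact_mod_cast hk1
  have hk2' : 2 * (k : ℝ) ≤ n := by exact_mod_cast hk2
  obtain ⟨θ, hθ⟩ : ∃ θ : ℝ, θ = k * Real.pi / n := ⟨_, rfl⟩
  have hθ2 : k * Real.pi / (2 * n) = θ / 2 := by rw [hθ]; field_simp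
  rw [hθ2, ← hθ]
  have h0 : 0 < θ := by rw [hθ]; positivity
  have h1 : θ ≤ Real.pi / 2 := by
    rw [hθ, div_le_div_iff₀ hn0 two_pos]
    nlinarith
  have s1 : 0 < Real.sin θ := Real.sin_pos_of_pos_of_lt_pi h0 (by linarith)
  have s2 : 0 < Real.sin (θ / 2) := Real.sin_pos_of_pos_of_lt_pi (by linarith) (by linarith)
  have hlog : 0 ≤ Real.log (4 * k - 1) := Real.log_nonneg (by linarith)
  constructor
  · have term : ∀ j ∈ Finset.range k, 1 / (x k - x j) ≤
        (k / (2 * Real.sin θ * Real.sin (θ / 2))) * (1 / ((k : ℝ) - j) + 1 / ((k : ℝ) + j)) := by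
      intro j hj
      have hjk : (j : ℝ) < k := by exact_mod_cast Finset.mem_range.1 hj
      have hj0 : (0 : ℝ) ≤ j := Nat.cast_nonneg j
      have hd : 0 < (k : ℝ) - j := sub_pos.2 hjk
      have ht1 : (j : ℝ) / k < 1 := (div_lt_one hk0).2 hjk
      have ht0 : 0 ≤ (j : ℝ) / k := by positivity
      have key := cos_sub_cos_ge h0 h1 ht0 ht1
      have ex : x k - x j = Real.cos (j / k * θ) - Real.cos θ := by
        rw [hx, hx, ← hθ, show (j : ℝ) * Real.pi / n = j / k * θ by rw [hθ]; field_simp]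
        ring
      have hpos : 0 < (1 - ((j : ℝ) / k) ^ 2) * (Real.sin θ * Real.sin (θ / 2)) :=
        mul_pos (by nlinarith) (mul_pos s1 s2)
      rw [ex]
      refine (one_div_le_one_div_of_le hpos key).trans (le_of_eq ?_)
      have e1 : 1 - ((j : ℝ) / k) ^ 2 = (k - j) * (k + j) / k ^ 2 := by
        field_simp
        ring
      have hs : (0 : ℝ) < k + j := by positivity
      rw [e1]
      field_simp
      ring
    refine (Finset.sum_le_sum term).trans ?_
    rw [← Finset.mul_sum]
    refine (mul_le_mul_of_nonneg_left (sum_inv_sub_add_le hk1) (by positivity)).trans (le_of_eq ?_)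
    field_simp
  · have c1 : 2 * k / n ≤ Real.sin θ := by
      have := smul_sin_le (s := 2 * k / n) (b := Real.pi / 2) (by positivity)
        ((div_le_one hn0).2 hk2') (by linarith) (by linarith)
      rwa [Real.sin_pi_div_two, mul_one,
        show 2 * (k : ℝ) / n * (Real.pi / 2) = θ by rw [hθ]; field_simp] at this
    have c2 : 2 * k / n * (Real.sqrt 2 / 2) ≤ Real.sin (θ / 2) := by
      have := smul_sin_le (s := 2 * k / n) (b := Real.pi / 4) (by positivity)
        ((div_le_one hn0).2 hk2') (by linarith) (by linarith)
      rwa [Real.sin_pi_div_four,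
        show 2 * (k : ℝ) / n * (Real.pi / 4) = θ / 2 by rw [hθ]; field_simp; norm_num] at this
    have hsq : (0 : ℝ) < Real.sqrt 2 := by positivity
    have c3 := mul_le_mul c1 c2 (by positivity) s1.le
    have c4 : 4 * Real.sqrt 2 * k ^ 2 / n ^ 2 ≤ 2 * Real.sin θ * Real.sin (θ / 2) := by
      have : 4 * Real.sqrt 2 * (k : ℝ) ^ 2 / n ^ 2 =
          2 * (2 * k / n * (2 * k / n * (Real.sqrt 2 / 2))) := by
        field_simp
        ring
      rw [this]
      linarith
    have hA : 0 ≤ 1 + k * Real.log (4 * k - 1) := by positivity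
    refine (div_le_div_of_nonneg_left hA (by positivity) c4).trans (le_of_eq ?_)
    field_simp
end

section
/- Let n ≥ 2 and let x_j = −cos(jπ/n) be the Chebyshev points of the second kind. Then for every integer k with 1 ≤ k ≤ n/2, Σ_{j≠k} 1/|x_k − x_j| ≤ (n²/(4√2))·(1 + log 3 + 3·log 5) < 1.3·n², where log is the natural logarithm. -/
/-!
With `t = π / (2n)`, the product formula gives
`|x k - x j| = 2 sin ((j + k) t) sin (|j - k| t)`. Jordan's inequality `sin (a t) ≥ a / n`
(for `0 ≤ a ≤ n`) bounds the second factor for every `j`, and the first one when `j + k ≤ n`,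
where `|x k - x j| ≥ 2 |j² - k²| / n²`. When `n < j + k ≤ 3n/2`, the first factor is at least
`√2 / 2`, so `|x k - x j| ≥ √2 / n`.

Summing over the three ranges `j < k`, `k < j ≤ n - k` and `n - k < j ≤ n`, with
`k² - j² ≥ 2k - 1` in the first range and `j² - k² ≥ m (m + 2)` for `m = j - k` in the second,
bounds the sum by `(n² / 2) (k / (2k - 1) + 3 / 4) + k n √2 / 2`. This is below the claimed bound
(with room to spare) when `k ≥ 2`, or when `k = 1` and `n ≥ 3`; for `n = 2` the middle range
is empty, which saves the summand `3 / 4`.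
-/

/-- Jordan's inequality in the scaling used for Chebyshev points. -/
lemma jordan_scaled {n : ℕ} (hn : 0 < n) {a : ℝ} (h0 : 0 ≤ a) (h1 : a ≤ n) :
    a / n ≤ Real.sin (a * Real.pi / (2 * n)) := by
  have hn' : (0 : ℝ) < n := by exact_mod_cast hn
  have hpi := Real.pi_pos
  have h := Real.mul_le_sin (x := a * Real.pi / (2 * n)) (by positivity) (by
    rw [div_le_div_iff₀ (by positivity) (by positivity)]
    nlinarith [mul_le_mul_of_nonneg_right h1 hpi.le])
  calc a / n = 2 / Real.pi * (a * Real.pi / (2 * n)) := by field_simp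
    _ ≤ _ := h

lemma sin_ge_of_mid {n : ℕ} (hn : 0 < n) {a : ℝ} (h0 : n ≤ a) (h1 : 2 * a ≤ 3 * n) :
    Real.sqrt 2 / 2 ≤ Real.sin (a * Real.pi / (2 * n)) := by
  have hn' : (0 : ℝ) < n := by exact_mod_cast hn
  have hpi := Real.pi_pos
  -- `sin θ = cos (θ - π / 2)`, and `θ - π / 2` lies in `[0, π / 4]`
  rw [← Real.cos_sub_pi_div_two, ← Real.cos_pi_div_four]
  apply Real.cos_le_cos_of_nonneg_of_le_pi
  · have : Real.pi / 2 ≤ a * Real.pi / (2 * n) := by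
      rw [div_le_div_iff₀ (by positivity) (by positivity)]
      nlinarith [mul_le_mul_of_nonneg_right h0 hpi.le]
    linarith
  · linarith
  · have : a * Real.pi / (2 * n) ≤ 3 * Real.pi / 4 := by
      rw [div_le_div_iff₀ (by positivity) (by positivity)]
      nlinarith [mul_le_mul_of_nonneg_right h1 hpi.le]
    linarith

lemma cos_sub_cos_scaled {n : ℕ} (hn : 0 < n) (a b : ℝ) :
    Real.cos (a * Real.pi / n) - Real.cos (b * Real.pi / n) =
      2 * Real.sin ((b + a) * Real.pi / (2 * n)) * Real.sin ((b - a) * Real.pi / (2 * n)) := by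
  have hn' : (n : ℝ) ≠ 0 := by exact_mod_cast hn.ne'
  rw [Real.cos_sub_cos]
  have h1 : (a * Real.pi / n + b * Real.pi / n) / 2 = (b + a) * Real.pi / (2 * n) := by
    field_simp; ring
  have h2 : (a * Real.pi / n - b * Real.pi / n) / 2 = -((b - a) * Real.pi / (2 * n)) := by
    field_simp; ring
  rw [h1, h2, Real.sin_neg]; ring

/-- The gap between two nodes whose indices satisfy `a ≤ b` and `a + b ≤ n`. -/
lemma gap_near {n : ℕ} (hn : 0 < n) {a b : ℝ} (h0 : 0 ≤ a) (hab : a ≤ b) (h1 : a + b ≤ n) :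
    2 * (b ^ 2 - a ^ 2) / n ^ 2 ≤ Real.cos (a * Real.pi / n) - Real.cos (b * Real.pi / n) := by
  have hn' : (0 : ℝ) < n := by exact_mod_cast hn
  rw [cos_sub_cos_scaled hn]
  have h2 := jordan_scaled hn (a := b + a) (by linarith) (by linarith)
  have h3 := jordan_scaled hn (a := b - a) (by linarith) (by linarith)
  have h4 : 0 ≤ (b + a) / n := by apply div_nonneg <;> linarith
  have h5 : 0 ≤ (b - a) / n := by apply div_nonneg <;> linarith
  have h6 := mul_le_mul h2 h3 h5 (h4.trans h2)
  calc 2 * (b ^ 2 - a ^ 2) / n ^ 2 = 2 * ((b + a) / n * ((b - a) / n)) := by field_simp; ring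
    _ ≤ _ := by linarith

/-- The gap between two nodes whose indices differ by at least `1` and satisfy `n ≤ a + b ≤ 3n/2`. -/
lemma gap_far {n : ℕ} (hn : 0 < n) {a b : ℝ} (h0 : 0 ≤ a) (hab : a + 1 ≤ b) (hb : b ≤ n)
    (h1 : n ≤ a + b) (h2 : 2 * (a + b) ≤ 3 * n) :
    Real.sqrt 2 / n ≤ Real.cos (a * Real.pi / n) - Real.cos (b * Real.pi / n) := by
  have hn' : (0 : ℝ) < n := by exact_mod_cast hn
  rw [cos_sub_cos_scaled hn]
  have h3 := sin_ge_of_mid hn (a := b + a) (by linarith) (by linarith)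
  have h4 := jordan_scaled hn (a := b - a) (by linarith) (by linarith)
  have h5 : 1 / (n : ℝ) ≤ (b - a) / n := by gcongr; linarith
  have h6 := mul_le_mul h3 (h5.trans h4) (by positivity)
    (le_trans (by positivity) h3)
  calc Real.sqrt 2 / n = 2 * (Real.sqrt 2 / 2 * (1 / n)) := by field_simp
    _ ≤ _ := by linarith

lemma sum_telescoping (M : ℕ) :
    ∑ i ∈ Finset.range M, 1 / (((i : ℝ) + 1) * (i + 3)) ≤ 3 / 4 := by
  have h : ∑ i ∈ Finset.range M, 1 / (((i : ℝ) + 1) * (i + 3)) =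
      3 / 4 - (1 / (M + 1) + 1 / (M + 2)) / 2 := by
    induction M with
    | zero => norm_num
    | succ m ih =>
      rw [Finset.sum_range_succ, ih]
      push_cast
      field_simp
      ring
  rw [h]
  have : (0 : ℝ) ≤ (1 / (M + 1) + 1 / (M + 2)) / 2 := by positivity
  linarith

/-- The bound obtained by estimating each gap; here `n = 2k + M`, and the three summands come from
the ranges `j < k`, `k < j ≤ n - k` and `n - k < j ≤ n`. -/
lemma sum_bound {n : ℕ} (x : ℕ → ℝ)
    (hx : ∀ j, x j = -Real.cos (j * Real.pi / n))
    (k M : ℕ) (hk1 : 1 ≤ k) (hM : n = 2 * k + M) :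
    (∑ j ∈ (Finset.range (n + 1)).erase k, 1 / |x k - x j|) ≤
      k * (n ^ 2 / (2 * (2 * k - 1))) +
      n ^ 2 / 2 * (∑ i ∈ Finset.range M, 1 / (((i : ℝ) + 1) * (i + 3))) +
      k * (n / Real.sqrt 2) := by
  have hn : 0 < n := by omega
  have hn' : (0 : ℝ) < n := by exact_mod_cast hn
  have hk' : (1 : ℝ) ≤ k := by exact_mod_cast hk1
  have hM' : (n : ℝ) = 2 * k + M := by exact_mod_cast hM
  have hM0 : (0 : ℝ) ≤ M := by positivity
  -- the term at `j = k` is `1 / 0 = 0`, so erasing it does not change the sum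
  rw [Finset.sum_erase _ (by simp)]
  have hsplit : n + 1 = k + (1 + (M + k)) := by omega
  rw [hsplit, Finset.sum_range_add, Finset.sum_range_add _ 1, Finset.sum_range_add _ M]
  have e1 : ∑ j ∈ Finset.range k, 1 / |x k - x j| ≤ k * (n ^ 2 / (2 * (2 * k - 1))) := by
    have h : ∀ j ∈ Finset.range k, 1 / |x k - x j| ≤ (n : ℝ) ^ 2 / (2 * (2 * k - 1)) := by
      intro j hj
      have hj' : (j : ℝ) + 1 ≤ k := by exact_mod_cast Finset.mem_range.mp hj
      have hj0 : (0 : ℝ) ≤ j := by positivity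
      have g := gap_near hn (a := j) (b := k) hj0 (by linarith) (by linarith)
      have hpos : (0 : ℝ) < 2 * (2 * k - 1) / n ^ 2 := by
        apply div_pos <;> [linarith; positivity]
      have g2 : 2 * (2 * (k : ℝ) - 1) / n ^ 2 ≤ |x k - x j| := by
        refine le_trans ?_ (le_abs_self _)
        rw [hx, hx]
        have hsq : 2 * (k : ℝ) - 1 ≤ (k : ℝ) ^ 2 - (j : ℝ) ^ 2 := by nlinarith
        refine le_trans ?_ (g.trans_eq (by ring))
        exact div_le_div_of_nonneg_right (by linarith) (by positivity)
      calc _ ≤ 1 / (2 * (2 * (k : ℝ) - 1) / n ^ 2) := one_div_le_one_div_of_le hpos g2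
        _ = _ := by rw [one_div_div]
    simpa using Finset.sum_le_card_nsmul _ _ _ h
  have e2 : ∑ i ∈ Finset.range M, 1 / |x k - x (k + (1 + i))| ≤
      n ^ 2 / 2 * (∑ i ∈ Finset.range M, 1 / (((i : ℝ) + 1) * (i + 3))) := by
    rw [Finset.mul_sum]
    apply Finset.sum_le_sum
    intro i hi
    have hi' : (i : ℝ) + 1 ≤ M := by exact_mod_cast Finset.mem_range.mp hi
    have hi0 : (0 : ℝ) ≤ i := by positivity
    have g := gap_near hn (a := k) (b := (k + (1 + i) : ℕ)) (by linarith)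
      (by push_cast; linarith) (by push_cast; linarith)
    have g2 : 2 * (((i : ℝ) + 1) * (i + 3)) / n ^ 2 ≤ |x k - x (k + (1 + i))| := by
      rw [abs_sub_comm]
      refine le_trans ?_ (le_abs_self _)
      rw [hx, hx]
      refine le_trans ?_ (g.trans_eq (by ring))
      gcongr
      push_cast
      nlinarith
    calc _ ≤ 1 / (2 * (((i : ℝ) + 1) * (i + 3)) / n ^ 2) :=
          one_div_le_one_div_of_le (by positivity) g2
      _ = _ := by field_simp
  have e3 : ∑ i ∈ Finset.range k, 1 / |x k - x (k + (1 + (M + i)))| ≤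
      k * (n / Real.sqrt 2) := by
    have h : ∀ i ∈ Finset.range k, 1 / |x k - x (k + (1 + (M + i)))| ≤
        (n : ℝ) / Real.sqrt 2 := by
      intro i hi
      have hi' : (i : ℝ) + 1 ≤ k := by exact_mod_cast Finset.mem_range.mp hi
      have hi0 : (0 : ℝ) ≤ i := by positivity
      have g := gap_far hn (a := k) (b := (k + (1 + (M + i)) : ℕ)) (by linarith)
        (by push_cast; linarith) (by push_cast; linarith) (by push_cast; linarith)
        (by push_cast; linarith)
      have g2 : Real.sqrt 2 / n ≤ |x k - x (k + (1 + (M + i)))| := by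
        rw [abs_sub_comm]
        refine le_trans ?_ (le_abs_self _)
        rw [hx, hx]
        exact g.trans_eq (by ring)
      calc _ ≤ 1 / (Real.sqrt 2 / n) := one_div_le_one_div_of_le (by positivity) g2
        _ = _ := by rw [one_div_div]
    simpa using Finset.sum_le_card_nsmul _ _ _ h
  have e0 : ∑ i ∈ Finset.range 1, 1 / |x k - x (k + i)| = 0 := by simp
  rw [e0]
  linarith

lemma log_const_lower : 6.5 ≤ 1 + Real.log 3 + 3 * Real.log 5 := by
  have he := Real.exp_one_lt_d9
  have h3 : 1 ≤ Real.log 3 := by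
    rw [Real.le_log_iff_exp_le (by norm_num)]; linarith
  have h5 : 3 ≤ Real.log (5 ^ 2) := by
    rw [Real.le_log_iff_exp_le (by norm_num)]
    have : Real.exp 3 = Real.exp 1 ^ 3 := by rw [← Real.exp_nat_mul]; norm_num
    rw [this]
    calc Real.exp 1 ^ 3 ≤ 2.7182818286 ^ 3 := by gcongr
      _ ≤ 5 ^ 2 := by norm_num
  rw [Real.log_pow] at h5
  push_cast at h5
  linarith

lemma log_const_upper : 1 + Real.log 3 + 3 * Real.log 5 ≤ 7.25 := by
  have he := Real.exp_one_gt_d9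
  have hexp : (125 : ℝ) ≤ Real.exp 5 := by
    have : Real.exp 5 = Real.exp 1 ^ 5 := by rw [← Real.exp_nat_mul]; norm_num
    rw [this]
    calc (125 : ℝ) ≤ 2.7182818283 ^ 5 := by norm_num
      _ ≤ Real.exp 1 ^ 5 := by gcongr
  have h3 : Real.log (3 ^ 4) ≤ 5 := by
    rw [Real.log_le_iff_le_exp (by norm_num)]; linarith
  have h5 : Real.log (5 ^ 3) ≤ 5 := by
    rw [Real.log_le_iff_le_exp (by norm_num)]; linarith
  rw [Real.log_pow] at h3 h5
  push_cast at h3 h5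
  linarith

theorem stmt_16 {n : ℕ} (hn : 2 ≤ n) (x : ℕ → ℝ)
    (hx : ∀ j, x j = -Real.cos (j * Real.pi / n))
    (k : ℕ) (hk1 : 1 ≤ k) (hk2 : 2 * k ≤ n) :
    (∑ j ∈ (Finset.range (n + 1)).erase k, 1 / |x k - x j|) ≤
        n ^ 2 / (4 * Real.sqrt 2) * (1 + Real.log 3 + 3 * Real.log 5) ∧
      n ^ 2 / (4 * Real.sqrt 2) * (1 + Real.log 3 + 3 * Real.log 5) < 1.3 * n ^ 2 := by
  have hn' : (2 : ℝ) ≤ n := by exact_mod_cast hn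
  have hs : Real.sqrt 2 ^ 2 = 2 := Real.sq_sqrt (by norm_num)
  have hs0 : 0 < Real.sqrt 2 := by positivity
  have hs1 : 1.414 < Real.sqrt 2 := by
    rw [Real.lt_sqrt (by norm_num)]; norm_num
  have hs2 : Real.sqrt 2 < 1.415 := by
    rw [Real.sqrt_lt' (by norm_num)]; norm_num
  have hinv : 1 / Real.sqrt 2 = Real.sqrt 2 / 2 := by
    rw [div_eq_div_iff hs0.ne' (by norm_num)]; nlinarith
  have hfac : (n : ℝ) ^ 2 / (4 * Real.sqrt 2) = n ^ 2 * (Real.sqrt 2 / 8) := by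
    calc (n : ℝ) ^ 2 / (4 * Real.sqrt 2) = n ^ 2 / 4 * (1 / Real.sqrt 2) := by field_simp
      _ = _ := by rw [hinv]; ring
  have hN : (0 : ℝ) < (n : ℝ) ^ 2 := by positivity
  rw [hfac]
  constructor
  · obtain ⟨M, hM⟩ := Nat.exists_eq_add_of_le hk2
    have hb := sum_bound x hx k M hk1 hM
    have ht := sum_telescoping M
    have hk' : (1 : ℝ) ≤ k := by exact_mod_cast hk1
    have hM' : (n : ℝ) = 2 * k + M := by exact_mod_cast hM
    have hM0 : (0 : ℝ) ≤ M := by positivity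
    have hlow : (n : ℝ) ^ 2 * 1.148 ≤
        n ^ 2 * (Real.sqrt 2 / 8) * (1 + Real.log 3 + 3 * Real.log 5) := by
      rw [mul_assoc]
      gcongr
      calc (1.148 : ℝ) ≤ 1.414 / 8 * 6.5 := by norm_num
        _ ≤ _ := by gcongr; exact log_const_lower
    refine hb.trans (le_trans ?_ hlow)
    have hfar : (k : ℝ) * (n / Real.sqrt 2) ≤ k * n * 0.7075 := by
      calc (k : ℝ) * (n / Real.sqrt 2) = k * n * (1 / Real.sqrt 2) := by field_simp
        _ ≤ _ := by rw [hinv]; gcongr; linarith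
    rcases Nat.lt_or_ge 1 k with h | h
    · have hk2' : (2 : ℝ) ≤ k := by exact_mod_cast h
      have h1 : (k : ℝ) * (n ^ 2 / (2 * (2 * k - 1))) ≤ n ^ 2 / 3 := by
        rw [← mul_div_assoc, div_le_div_iff₀ (by linarith) (by norm_num)]
        nlinarith
      nlinarith
    · obtain rfl : k = 1 := by omega
      rcases Nat.eq_zero_or_pos M with h0 | h0
      · subst h0
        have : (n : ℝ) = 2 := by rw [hM']; norm_num
        rw [this] at hfar ⊢
        norm_num at hfar ⊢
        linarith
      · have : (1 : ℝ) ≤ M := by exact_mod_cast h0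
        have h3 : (3 : ℝ) ≤ n := by rw [hM']; push_cast; linarith
        have h4 := mul_le_mul_of_nonneg_left ht (by positivity : (0 : ℝ) ≤ (n : ℝ) ^ 2 / 2)
        have h5 : ((1 : ℕ) : ℝ) * ((n : ℝ) ^ 2 / (2 * (2 * ((1 : ℕ) : ℝ) - 1))) = n ^ 2 / 2 := by
          norm_num
        rw [h5]
        have h6 : ((1 : ℕ) : ℝ) * n * 0.7075 ≤ n ^ 2 * 0.236 := by
          push_cast; nlinarith
        linarith
  · rw [mul_assoc, mul_comm (1.3 : ℝ)]
    gcongr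
    have := log_const_upper
    have := log_const_lower
    nlinarith
end

section
/- Let n ≥ 1 and let x_j = −cos(jπ/n) be the Chebyshev points of the second kind. Then Σ_{j=1}^{n} 1/(x_j − x_0) ≤ π²·n²/12 < 0.9·n². -/
/-! With `t = jπ/n ∈ [0, π]`, the bound `cos t ≤ 1 - 2 t² / π²` gives
`x_j - x_0 = 1 - cos t ≥ 2 j² / n²`, so the sum is at most `(n² / 2) ∑ 1 / j² ≤ (n² / 2) (π² / 6)`
by the value of `ζ(2)`. The strict inequality is `π² < 10.8`. -/

theorem stmt_17 {n : ℕ} (hn : 1 ≤ n) (x : ℕ → ℝ)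
    (hx : ∀ j, x j = -Real.cos (j * Real.pi / n)) :
    (∑ j ∈ Finset.Icc 1 n, 1 / (x j - x 0)) ≤ Real.pi ^ 2 * n ^ 2 / 12 ∧
      Real.pi ^ 2 * n ^ 2 / 12 < 0.9 * n ^ 2 := by
  have hn0 : (0 : ℝ) < n := by exact_mod_cast hn
  have hpi := Real.pi_pos
  constructor
  · have hterm : ∀ j ∈ Finset.Icc 1 n,
        1 / (x j - x 0) ≤ (n : ℝ) ^ 2 / 2 * (1 / (j : ℝ) ^ 2) := by
      intro j hj
      obtain ⟨h1, h2⟩ := Finset.mem_Icc.mp hj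
      have hj0 : (0 : ℝ) < j := by exact_mod_cast h1
      have hjn : (j : ℝ) ≤ n := by exact_mod_cast h2
      have habs : |(j * Real.pi / n : ℝ)| ≤ Real.pi := by
        rw [abs_of_nonneg (by positivity), div_le_iff₀ hn0]
        nlinarith
      have hcos := Real.cos_le_one_sub_mul_cos_sq habs
      have hsq : 2 / Real.pi ^ 2 * (j * Real.pi / n) ^ 2 = 2 * (j : ℝ) ^ 2 / n ^ 2 := by
        field_simp
      have hle : 2 * (j : ℝ) ^ 2 / n ^ 2 ≤ x j - x 0 := by
        rw [hx j, hx 0]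
        simp only [Nat.cast_zero, zero_mul, zero_div, Real.cos_zero]
        linarith
      calc 1 / (x j - x 0) ≤ 1 / (2 * (j : ℝ) ^ 2 / n ^ 2) :=
            one_div_le_one_div_of_le (by positivity) hle
        _ = (n : ℝ) ^ 2 / 2 * (1 / (j : ℝ) ^ 2) := by field_simp
    have hzeta : ∑ j ∈ Finset.Icc 1 n, 1 / (j : ℝ) ^ 2 ≤ Real.pi ^ 2 / 6 :=
      sum_le_hasSum _ (fun _ _ => by positivity) hasSum_zeta_two
    calc ∑ j ∈ Finset.Icc 1 n, 1 / (x j - x 0)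
        ≤ ∑ j ∈ Finset.Icc 1 n, (n : ℝ) ^ 2 / 2 * (1 / (j : ℝ) ^ 2) := Finset.sum_le_sum hterm
      _ = (n : ℝ) ^ 2 / 2 * ∑ j ∈ Finset.Icc 1 n, 1 / (j : ℝ) ^ 2 := by rw [Finset.mul_sum]
      _ ≤ (n : ℝ) ^ 2 / 2 * (Real.pi ^ 2 / 6) := by gcongr
      _ = Real.pi ^ 2 * n ^ 2 / 12 := by ring
  · have hpi2 : Real.pi ^ 2 < 10.8 := by nlinarith [Real.pi_lt_d2]
    have hnsq : (0 : ℝ) < (n : ℝ) ^ 2 := by positivity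
    nlinarith
end

section
/- Let n ≥ 1, let x_k = −cos(kπ/n) be the Chebyshev points of the second kind, let θ ∈ ℝ^{n+1}, and define the binned rounded nodes x̃_k as follows: if x_k < −1/2 then x̃_k := −1 + (x_k + 1)(1 + θ_k); if |x_k| ≤ 1/2 then x̃_k := x_k·(1 + θ_k); if x_k > 1/2 then x̃_k := 1 + (x_k − 1)(1 + θ_k). Then for every k ∈ {0, …, n} there exists a real ε_k with |ε_k| ≤ ‖θ‖_∞ such that x̃_k + 1 = (x_k + 1)(1 + ε_k), where ‖θ‖_∞ = max_k |θ_k|. -/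
/-!
In each bin, `xt k + 1 = (x k + 1) * (1 + c * θ k)` with `c = 1`, `c = x k / (x k + 1)` or
`c = (x k - 1) / (x k + 1)`. In the last two bins `x k ≥ -1/2`, respectively `1/2 < x k ≤ 1`,
so that `|c| ≤ 1`, and `ε = c * θ k` works.
-/

theorem stmt_18 {n : ℕ} (hn : 1 ≤ n) (θ x xt : Fin (n + 1) → ℝ)
    (hx : ∀ k : Fin (n + 1), x k = -Real.cos ((k : ℕ) * Real.pi / n))
    (hxt : ∀ k : Fin (n + 1), xt k =
      if x k < -(1 / 2) then -1 + (x k + 1) * (1 + θ k)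
      else if |x k| ≤ 1 / 2 then x k * (1 + θ k)
      else 1 + (x k - 1) * (1 + θ k))
    (k : Fin (n + 1)) :
    ∃ ε : ℝ, |ε| ≤ (Finset.univ.sup' Finset.univ_nonempty fun i => |θ i|) ∧
      xt k + 1 = (x k + 1) * (1 + ε) := by
  have hθ : |θ k| ≤ Finset.univ.sup' Finset.univ_nonempty fun i => |θ i| :=
    Finset.le_sup' (fun i => |θ i|) (Finset.mem_univ k)
  have hx1 : x k ≤ 1 := by
    rw [hx k]
    linarith [Real.neg_one_le_cos ((k : ℕ) * Real.pi / n)]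
  suffices h : ∃ c : ℝ, |c| ≤ 1 ∧ xt k + 1 = (x k + 1) * (1 + c * θ k) by
    obtain ⟨c, hc, h⟩ := h
    refine ⟨c * θ k, le_trans ?_ hθ, h⟩
    rw [abs_mul]
    exact mul_le_of_le_one_left (abs_nonneg _) hc
  rw [hxt k]
  split_ifs with h1 h2
  · exact ⟨1, by simp, by ring⟩
  · have hpos : 0 < x k + 1 := by linarith
    refine ⟨x k / (x k + 1), ?_, by field_simp; ring⟩
    rw [abs_div, abs_of_pos hpos, div_le_one hpos, abs_le]
    constructor <;> linarith
  · have hpos : 0 < x k + 1 := by linarith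
    have hgt : 1 / 2 < x k := by
      by_contra h
      exact h2 (abs_le.mpr ⟨by linarith, by linarith⟩)
    refine ⟨(x k - 1) / (x k + 1), ?_, by field_simp; ring⟩
    rw [abs_div, abs_of_pos hpos, div_le_one hpos, abs_le]
    constructor <;> linarith
end
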